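/- arXiv:1610.01916 — 2 statements merged into one kernel-verified Lean document; each statement's English description precedes it below -/
import Mathlib

section
/- Division by t − P(x) (Lemma 5.1): Let d ≥ 1, P holomorphic on D(0;R) ⊆ ℂ^d, real a < b ≤ a + 2π, r > 0, and let 𝒟 ⊆ D(0;R) be a domain (open and connected). For every holomorphic F : V(a,b;r) × 𝒟 → ℂ satisfying F(P(x), x) = 0 for every x ∈ 𝒟 with P(x) ∈ V(a,b;r), there exists a unique holomorphic H : V(a,b;r) × 𝒟 → ℂ such that F(t,x) = (t − P(x))·H(t,x) for all t ∈ V(a,b;r) and all x ∈ 𝒟. -/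
open Set Complex

noncomputable section

/-- Open polydisk of radius `r` centered at `0` in `ℂ^d`. -/
def polydisk (d : ℕ) (r : ℝ) : Set (Fin d → ℂ) :=
  {x | ∀ j, ‖x j‖ < r}

/-- The sector `V(a,b;σ)` in `ℂ`. -/
def CSector (a b σ : ℝ) : Set ℂ :=
  {t | 0 < ‖t‖ ∧ ‖t‖ < σ ∧
    ∃ θ ∈ Set.Ioo a b, t = (‖t‖ : ℂ) * Complex.exp (θ * Complex.I)}

/-! The power series of an analytic `F` telescopes termwise: `F(y) - F(z) = Φ(y, z) (y - z)` with
`Φ` analytic near the diagonal and valued in linear maps. Taking `y = (t, x)` and `z = (P(x), x)`,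
where `F(z) = 0` and `y - z = (t - P(x)) • (1, 0)`, exhibits `t - P(x)` as a factor of `F` near each
point of the graph of `P`; off the graph one divides by it. As `t - P(x)` vanishes on no nonempty
open set, a continuous quotient is determined by `F`, so the local quotients agree on overlaps and
glue. -/

open Filter Topology

section DividedDifference

variable {𝕜 E F : Type*} [NontriviallyNormedField 𝕜]
  [NormedAddCommGroup E] [NormedSpace 𝕜 E] [NormedAddCommGroup F] [NormedSpace 𝕜 F]

/-- The divided difference of a multilinear map `f` along the diagonal: at `n` copies of `(y, z)`
it is the linear map `v ↦ ∑ k, f (y, …, y, v, z, …, z)` with `v` in position `k`. It is kept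
multilinear in the pair, so that the divided differences of the terms of a power series again form
a power series. -/
def dividedDifference {n : ℕ} (f : E [×(n + 1)]→L[𝕜] F) : (E × E) [×n]→L[𝕜] (E →L[𝕜] F) :=
  ∑ k : Fin (n + 1), (f.curryMid k).flipMultilinear.compContinuousLinearMap fun i ↦
    if k.succAbove i < k then ContinuousLinearMap.fst 𝕜 E E else ContinuousLinearMap.snd 𝕜 E E

theorem map_const_sub_map_const_eq_dividedDifference {n : ℕ} (f : E [×(n + 1)]→L[𝕜] F)
    (y z : E) :
    f (fun _ ↦ y) - f (fun _ ↦ z) = dividedDifference f (fun _ ↦ (y, z)) (y - z) := by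
  have telescope := f.toMultilinearMap.map_piecewise_sub_map_piecewise
    (fun _ ↦ y) (fun _ ↦ z) (fun _ ↦ z) Finset.univ
  simp only [Finset.piecewise_univ, Finset.mem_univ, if_true,
    ContinuousMultilinearMap.coe_coe] at telescope
  simp only [telescope, dividedDifference, sum_apply,
    ContinuousMultilinearMap.compContinuousLinearMap_apply,
    ContinuousLinearMap.flipMultilinear_apply_apply, ContinuousMultilinearMap.curryMid_apply]
  refine Finset.sum_congr rfl fun k _ ↦ congrArg f (Fin.eq_insertNth_iff.2 ⟨by simp, ?_⟩)
  ext i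
  by_cases hi : k.succAbove i < k <;> simp [Fin.removeNth, Fin.succAbove_ne, hi]

theorem norm_dividedDifference_le {n : ℕ} (f : E [×(n + 1)]→L[𝕜] F) :
    ‖dividedDifference f‖ ≤ (n + 1) * ‖f‖ := by
  have norm_flip_le (k : Fin (n + 1)) : ‖(f.curryMid k).flipMultilinear‖ ≤ ‖f‖ :=
    (MultilinearMap.mkContinuous_norm_le _ (norm_nonneg _) _).trans_eq (f.norm_curryMid k)
  have prod_norm_le_one (k : Fin (n + 1)) : ∏ i, ‖if k.succAbove i < k then
      ContinuousLinearMap.fst 𝕜 E E else ContinuousLinearMap.snd 𝕜 E E‖ ≤ 1 := by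
    refine Finset.prod_le_one (fun _ _ ↦ norm_nonneg _) fun i _ ↦ ?_
    split_ifs
    exacts [ContinuousLinearMap.norm_fst_le 𝕜 E E, ContinuousLinearMap.norm_snd_le 𝕜 E E]
  calc
    ‖dividedDifference f‖ ≤ ∑ _k : Fin (n + 1), ‖f‖ * 1 :=
      norm_sum_le_of_le _ fun k _ ↦
        (ContinuousMultilinearMap.norm_compContinuousLinearMap_le _ _).trans <|
          mul_le_mul (norm_flip_le k) (prod_norm_le_one k) (by positivity) (norm_nonneg f)
    _ = (n + 1) * ‖f‖ := by simp

/-- The power series in the pair `(y, z)` whose sum `Φ` satisfies `f y - f z = Φ (y, z) (y - z)`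
when `f` is the sum of `p`. The constant term of `p` cancels, whence the shift of the index. -/
def dividedDifferenceSeries (p : FormalMultilinearSeries 𝕜 E F) :
    FormalMultilinearSeries 𝕜 (E × E) (E →L[𝕜] F) :=
  fun n ↦ dividedDifference (p (n + 1))

theorem radius_le_radius_dividedDifferenceSeries (p : FormalMultilinearSeries 𝕜 E F) :
    p.radius ≤ (dividedDifferenceSeries p).radius := by
  refine ENNReal.le_of_forall_nnreal_lt fun r hr ↦ ?_
  rcases eq_zero_or_pos r with rfl | r_pos
  · simp
  obtain ⟨a, ⟨a_pos, a_lt_one⟩, C, -, norm_le⟩ := p.norm_mul_pow_le_mul_pow_of_lt_radius hr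
  have majorant_tendsto :
      Tendsto (fun n : ℕ ↦ C / r * (((n + 1 : ℕ) : ℝ) * a ^ (n + 1))) atTop (𝓝 0) := by
    simpa using! ((tendsto_self_mul_const_pow_of_lt_one a_pos.le a_lt_one).comp
      (tendsto_add_atTop_nat 1)).const_mul (C / r)
  refine FormalMultilinearSeries.le_radius_of_tendsto _
    (squeeze_zero (fun n ↦ by positivity) (fun n ↦ ?_) majorant_tendsto)
  calc
    ‖dividedDifference (p (n + 1))‖ * (r : ℝ) ^ n ≤ (n + 1) * ‖p (n + 1)‖ * r ^ n := by
      gcongr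
      exact norm_dividedDifference_le _
    _ = (n + 1) / r * (‖p (n + 1)‖ * r ^ (n + 1)) := by field_simp; ring
    _ ≤ (n + 1) / r * (C * a ^ (n + 1)) :=
      mul_le_mul_of_nonneg_left (norm_le (n + 1)) (by positivity)
    _ = C / r * (((n + 1 : ℕ) : ℝ) * a ^ (n + 1)) := by push_cast; ring

variable [CompleteSpace F]

theorem sub_eq_sum_dividedDifferenceSeries_apply_sub {f : E → F}
    {p : FormalMultilinearSeries 𝕜 E F} {x : E} {r : ENNReal} (hf : HasFPowerSeriesOnBall f p x r)
    {y z : E} (hy : y ∈ Metric.eball 0 r) (hz : z ∈ Metric.eball 0 r) :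
    f (x + y) - f (x + z) = (dividedDifferenceSeries p).sum (y, z) (y - z) := by
  have radius_le := hf.r_le.trans (radius_le_radius_dividedDifferenceSeries p)
  have hyz : (y, z) ∈ Metric.eball 0 (dividedDifferenceSeries p).radius :=
    Metric.eball_subset_eball radius_le ((Metric.eball_prod_same (0 : E) (0 : E) r).subset ⟨hy, hz⟩)
  have hasSum_dividedDifference :
      HasSum (fun n ↦ dividedDifference (p (n + 1)) (fun _ ↦ (y, z)) (y - z))
        ((dividedDifferenceSeries p).sum (y, z) (y - z)) :=
    ((dividedDifferenceSeries p).hasSum hyz).mapL (ContinuousLinearMap.apply 𝕜 F (y - z))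
  have hasSum_sub := (hf.hasSum hy).sub (hf.hasSum hz)
  have constant_term_sub : (p 0 fun _ ↦ y) - (p 0 fun _ ↦ z) = 0 :=
    sub_eq_zero.2 (congrArg (p 0) (Subsingleton.elim _ _))
  rw [← hasSum_nat_add_iff' 1] at hasSum_sub
  simp only [Finset.sum_range_one, constant_term_sub, sub_zero,
    map_const_sub_map_const_eq_dividedDifference] at hasSum_sub
  exact hasSum_sub.unique hasSum_dividedDifference

theorem exists_analyticAt_sub_eq_apply_sub {f : E → F} {x : E} (hf : AnalyticAt 𝕜 f x) :
    ∃ Φ : E × E → E →L[𝕜] F, AnalyticAt 𝕜 Φ (x, x) ∧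
      ∀ᶠ z in 𝓝 (x, x), f z.1 - f z.2 = Φ z (z.1 - z.2) := by
  obtain ⟨p, r, hp⟩ := hf
  have radius_pos : 0 < (dividedDifferenceSeries p).radius :=
    hp.radius_pos.trans_le (radius_le_radius_dividedDifferenceSeries p)
  refine ⟨fun z ↦ (dividedDifferenceSeries p).sum (z - (x, x)), ?_, ?_⟩
  · simpa using
      (((dividedDifferenceSeries p).hasFPowerSeriesOnBall radius_pos).comp_sub (x, x)).analyticAt
  · filter_upwards [Metric.eball_mem_nhds (x, x) hp.r_pos] with ⟨y, z⟩ hyz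
    obtain ⟨hy, hz⟩ : edist y x < r ∧ edist z x < r := by simpa [Prod.edist_eq] using hyz
    simpa using sub_eq_sum_dividedDifferenceSeries_apply_sub hp (y := y - x) (z := z - x)
      (by simpa [edist_eq_enorm_sub] using hy) (by simpa [edist_eq_enorm_sub] using hz)

end DividedDifference

section Quotient

variable {𝕜 E F : Type*} [NontriviallyNormedField 𝕜]
  [NormedAddCommGroup E] [NormedSpace 𝕜 E] [NormedAddCommGroup F] [NormedSpace 𝕜 F]

theorem eq_of_eventually_smul_eq_smul {X : Type*} [TopologicalSpace X] {g : X → 𝕜} {h h' : X → F}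
    {z : X} (hg : ∃ᶠ w in 𝓝 z, g w ≠ 0) (hh : ContinuousAt h z) (hh' : ContinuousAt h' z)
    (heq : ∀ᶠ w in 𝓝 z, g w • h w = g w • h' w) : h z = h' z :=
  tendsto_nhds_unique_of_frequently_eq hh hh' <|
    (hg.and_eventually heq).mono fun _ hw ↦ smul_right_injective F hw.1 hw.2

theorem exists_analyticOnNhd_eq_smul_of_forall_exists_analyticAt {g : E → 𝕜} {f : E → F} {Ω : Set E}
    (hΩ : IsOpen Ω) (hg : ∀ z ∈ Ω, ∃ᶠ w in 𝓝 z, g w ≠ 0)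
    (hlocal : ∀ z ∈ Ω, ∃ K : E → F, AnalyticAt 𝕜 K z ∧ ∀ᶠ w in 𝓝 z, f w = g w • K w) :
    ∃ H : E → F, AnalyticOnNhd 𝕜 H Ω ∧ ∀ z ∈ Ω, f z = g z • H z := by
  choose! K K_analyticAt K_eq using hlocal
  refine ⟨fun z ↦ K z z, fun z hz ↦ ?_, fun z hz ↦ (K_eq z hz).self_of_nhds⟩
  refine (K_analyticAt z hz).congr ?_
  filter_upwards [hΩ.mem_nhds hz, (K_eq z hz).eventually_nhds,
    (K_analyticAt z hz).eventually_continuousAt] with w hw K_eq_near_w K_continuousAt_w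
  refine eq_of_eventually_smul_eq_smul (hg w hw) K_continuousAt_w
    (K_analyticAt w hw).continuousAt ?_
  filter_upwards [K_eq_near_w, K_eq w hw] with v hv hv'
  rw [← hv, hv']

theorem frequently_fst_sub_ne_zero {X : Type*} [TopologicalSpace X] (P : X → 𝕜) (z : 𝕜 × X) :
    ∃ᶠ w in 𝓝 z, w.1 - P w.2 ≠ 0 := by
  obtain ⟨t, x⟩ := z
  have slice_tendsto : Tendsto (fun s : 𝕜 ↦ (s, x)) (𝓝 t) (𝓝 (t, x)) :=
    (Continuous.prodMk_left x).tendsto t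
  have frequently_ne : ∃ᶠ s in 𝓝 t, s ≠ P x :=
    mem_closure_iff_frequently.1 (dense_compl_singleton (P x) t)
  exact slice_tendsto.frequently (frequently_ne.mono fun _ ↦ sub_ne_zero.2)

variable {P : E → 𝕜}

theorem exists_analyticAt_eq_smul_of_ne {f : 𝕜 × E → F} {z : 𝕜 × E} (hz : z.1 ≠ P z.2)
    (hP : AnalyticAt 𝕜 P z.2) (hf : AnalyticAt 𝕜 f z) :
    ∃ K : 𝕜 × E → F, AnalyticAt 𝕜 K z ∧ ∀ᶠ w in 𝓝 z, f w = (w.1 - P w.2) • K w := by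
  have sub_analyticAt : AnalyticAt 𝕜 (fun w : 𝕜 × E ↦ w.1 - P w.2) z :=
    analyticAt_fst.sub (hP.comp analyticAt_snd)
  refine ⟨fun w ↦ (w.1 - P w.2)⁻¹ • f w, (sub_analyticAt.inv (sub_ne_zero.2 hz)).smul hf, ?_⟩
  filter_upwards [sub_analyticAt.continuousAt.eventually_ne (sub_ne_zero.2 hz)] with w hw
  rw [smul_inv_smul₀ hw]

variable [CompleteSpace F]

theorem exists_analyticAt_sub_graph_eq_smul {f : 𝕜 × E → F} {x : E} (hP : AnalyticAt 𝕜 P x)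
    (hf : AnalyticAt 𝕜 f (P x, x)) :
    ∃ K : 𝕜 × E → F, AnalyticAt 𝕜 K (P x, x) ∧
      ∀ᶠ w in 𝓝 (P x, x), f w - f (P w.2, w.2) = (w.1 - P w.2) • K w := by
  obtain ⟨Φ, Φ_analyticAt, Φ_eq⟩ := exists_analyticAt_sub_eq_apply_sub hf
  let pairWithGraph : 𝕜 × E → (𝕜 × E) × (𝕜 × E) := fun w ↦ (w, (P w.2, w.2))
  have pair_analyticAt : AnalyticAt 𝕜 pairWithGraph (P x, x) :=
    analyticAt_id.prod ((AnalyticAt.comp (g := P) hP analyticAt_snd).prod analyticAt_snd)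
  refine ⟨fun w ↦ Φ (pairWithGraph w) (1, 0), ?_, ?_⟩
  · exact ((ContinuousLinearMap.apply 𝕜 F ((1, 0) : 𝕜 × E)).analyticAt _).comp
      (AnalyticAt.comp (f := pairWithGraph) Φ_analyticAt pair_analyticAt)
  · filter_upwards [pair_analyticAt.continuousAt.eventually Φ_eq] with w hw
    have sub_eq_smul : w - (P w.2, w.2) = (w.1 - P w.2) • ((1, 0) : 𝕜 × E) := by
      ext <;> simp
    rw [← map_smul, ← sub_eq_smul]
    exact hw

theorem exists_analyticAt_eq_smul_of_eventually_graph_eq_zero {f : 𝕜 × E → F} {x : E}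
    (hP : AnalyticAt 𝕜 P x) (hf : AnalyticAt 𝕜 f (P x, x)) (hf0 : ∀ᶠ y in 𝓝 x, f (P y, y) = 0) :
    ∃ K : 𝕜 × E → F, AnalyticAt 𝕜 K (P x, x) ∧
      ∀ᶠ w in 𝓝 (P x, x), f w = (w.1 - P w.2) • K w := by
  obtain ⟨K, K_analyticAt, K_eq⟩ := exists_analyticAt_sub_graph_eq_smul hP hf
  refine ⟨K, K_analyticAt, ?_⟩
  filter_upwards [K_eq, continuousAt_snd.eventually hf0] with w hw hw0
  rw [← hw, hw0, sub_zero]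

theorem division_by_t_minus_P_general {Ω : Set (𝕜 × E)} (hΩ : IsOpen Ω)
    (hP : ∀ z ∈ Ω, AnalyticAt 𝕜 P z.2) {f : 𝕜 × E → F} (hf : AnalyticOnNhd 𝕜 f Ω)
    (hf0 : ∀ x, (P x, x) ∈ Ω → f (P x, x) = 0) :
    ∃ H : 𝕜 × E → F, AnalyticOnNhd 𝕜 H Ω ∧ (∀ z ∈ Ω, f z = (z.1 - P z.2) • H z) ∧
      ∀ H' : 𝕜 × E → F, AnalyticOnNhd 𝕜 H' Ω → (∀ z ∈ Ω, f z = (z.1 - P z.2) • H' z) →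
        EqOn H H' Ω := by
  have hlocal : ∀ z ∈ Ω, ∃ K : 𝕜 × E → F, AnalyticAt 𝕜 K z ∧
      ∀ᶠ w in 𝓝 z, f w = (w.1 - P w.2) • K w := by
    rintro ⟨t, x⟩ hz
    rcases ne_or_eq t (P x) with off_graph | rfl
    · exact exists_analyticAt_eq_smul_of_ne off_graph (hP _ hz) (hf _ hz)
    · have graph_mem : ∀ᶠ y in 𝓝 x, (P y, y) ∈ Ω :=
        ((hP _ hz).continuousAt.prodMk continuousAt_id).eventually (hΩ.mem_nhds hz)
      exact exists_analyticAt_eq_smul_of_eventually_graph_eq_zero (hP _ hz) (hf _ hz)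
        (graph_mem.mono hf0)
  obtain ⟨H, H_analytic, H_eq⟩ := exists_analyticOnNhd_eq_smul_of_forall_exists_analyticAt hΩ
    (fun z _ ↦ frequently_fst_sub_ne_zero P z) hlocal
  refine ⟨H, H_analytic, H_eq, fun H' H'_analytic H'_eq z hz ↦ ?_⟩
  refine eq_of_eventually_smul_eq_smul (frequently_fst_sub_ne_zero P z)
    (H_analytic z hz).continuousAt (H'_analytic z hz).continuousAt ?_
  filter_upwards [hΩ.mem_nhds hz] with w hw
  rw [← H_eq w hw, H'_eq w hw]

end Quotient

theorem CSector_eq_image_exp_inter_ball (a b σ : ℝ) :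
    CSector a b σ = exp '' (im ⁻¹' Ioo a b) ∩ Metric.ball 0 σ := by
  ext t
  constructor
  · rintro ⟨t_pos, t_lt, θ, hθ, t_eq⟩
    refine ⟨⟨Real.log ‖t‖ + θ * I, by simpa using hθ, ?_⟩, mem_ball_zero_iff.2 t_lt⟩
    rw [exp_add, ← ofReal_exp, Real.exp_log t_pos, ← t_eq]
  · rintro ⟨⟨w, hw, rfl⟩, w_mem⟩
    refine ⟨norm_pos_iff.2 (exp_ne_zero w), mem_ball_zero_iff.1 w_mem, w.im, hw, ?_⟩
    rw [norm_exp, ofReal_exp, ← exp_add, re_add_im]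

theorem isOpen_CSector (a b σ : ℝ) : IsOpen (CSector a b σ) := by
  rw [CSector_eq_image_exp_inter_ball]
  exact (isOpenMap_exp _ (isOpen_Ioo.preimage continuous_im)).inter Metric.isOpen_ball

/-- **Division by `t − P(x)`** (Lemma 5.1).
If `F` is holomorphic on `V(a,b;r) × 𝒟` and vanishes on the graph `t = P(x)`, then there is
a holomorphic `H` on `V(a,b;r) × 𝒟`, unique on that set, with `F(t,x) = (t − P(x))·H(t,x)`. -/
theorem division_by_t_minus_P
    (d : ℕ) (hd : 1 ≤ d) (R : ℝ) (hR : 0 < R)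
    (P : (Fin d → ℂ) → ℂ) (hP : AnalyticOnNhd ℂ P (polydisk d R))
    (a b : ℝ) (hab : a < b) (hab2 : b ≤ a + 2 * Real.pi) (r : ℝ) (hr : 0 < r)
    (𝒟 : Set (Fin d → ℂ)) (h𝒟o : IsOpen 𝒟) (h𝒟c : IsConnected 𝒟)
    (h𝒟sub : 𝒟 ⊆ polydisk d R)
    (F : ℂ × (Fin d → ℂ) → ℂ) (hF : AnalyticOnNhd ℂ F (CSector a b r ×ˢ 𝒟))
    (hF0 : ∀ x ∈ 𝒟, P x ∈ CSector a b r → F (P x, x) = 0) :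
    ∃ H : ℂ × (Fin d → ℂ) → ℂ,
      AnalyticOnNhd ℂ H (CSector a b r ×ˢ 𝒟) ∧
      (∀ t ∈ CSector a b r, ∀ x ∈ 𝒟, F (t, x) = (t - P x) * H (t, x)) ∧
      ∀ H' : ℂ × (Fin d → ℂ) → ℂ,
        AnalyticOnNhd ℂ H' (CSector a b r ×ˢ 𝒟) →
        (∀ t ∈ CSector a b r, ∀ x ∈ 𝒟, F (t, x) = (t - P x) * H' (t, x)) →
        Set.EqOn H H' (CSector a b r ×ˢ 𝒟) := by
  obtain ⟨H, H_analytic, H_eq, H_unique⟩ :=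
    division_by_t_minus_P_general ((isOpen_CSector a b r).prod h𝒟o)
      (fun z hz ↦ hP z.2 (h𝒟sub hz.2)) hF fun x hx ↦ hF0 x hx.2 hx.1
  exact ⟨H, H_analytic, fun t ht x hx ↦ H_eq (t, x) ⟨ht, hx⟩, fun H' H'_analytic H'_eq ↦
    H_unique H' H'_analytic fun z hz ↦ H'_eq z.1 hz.1 z.2 hz.2⟩
end
end

section
/- Stability of P-asymptotic expansions under blow-down (Proposition 6.1): Let d ≥ 2, P holomorphic on D(0;ρ_0) ⊆ ℂ^d with P(0) = 0 and P not identically zero, Π = Π_P(α,β;ρ_0), and f : Π → ℂ holomorphic. Assume that for every ξ ∈ ℂ ∪ {∞} there exist r_ξ > 0 with b_ξ(D(0;r_ξ)) ⊆ D(0;ρ_0), a sequence (g_n^ξ) of bounded holomorphic functions on D(0;r_ξ), and constants C_n^ξ > 0 such that |f(b_ξ(v)) − g_n^ξ(v)| ≤ C_n^ξ·|P(b_ξ(v))|^n for every n ∈ ℕ and every v in the (P∘b_ξ)-sector Π_{P∘b_ξ}(α,β;r_ξ) with b_ξ(v) ∈ Π. Then there exist ρ > 0, a sequence (f_n) of bounded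 holomorphic functions on D(0;ρ), and constants B_n > 0 such that |f(x) − f_n(x)| ≤ B_n·|P(x)|^n for every n ∈ ℕ and every x ∈ Π_P(α,β;ρ); that is, f admits a P-asymptotic expansion in the estimate sense. -/
open Set Complex

noncomputable section

/-- The `P`-sector `Π_P(a,b;r)`. -/
def PSector (d : ℕ) (P : (Fin d → ℂ) → ℂ) (a b r : ℝ) : Set (Fin d → ℂ) :=
  {x | (∀ j, 0 < ‖x j‖ ∧ ‖x j‖ < r) ∧ P x ≠ 0 ∧
    ∃ θ ∈ Set.Ioo a b, P x = (‖P x‖ : ℂ) * Complex.exp (θ * Complex.I)}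

/-- Blow-up chart at `ξ ∈ ℂ`: `b_ξ(v) = (v₂, (ξ+v₁)·v₂, v₃, …)` (in dimension `d+2`). -/
def blowUpC (d : ℕ) (ξ : ℂ) (v : Fin (d + 2) → ℂ) : Fin (d + 2) → ℂ :=
  fun i => if i = 0 then v 1 else if i = 1 then (ξ + v 0) * v 1 else v i

/-- Blow-up chart at `∞`: `b_∞(v) = (v₁·v₂, v₂, v₃, …)` (in dimension `d+2`). -/
def blowUpInf (d : ℕ) (v : Fin (d + 2) → ℂ) : Fin (d + 2) → ℂ :=
  fun i => if i = 0 then v 0 * v 1 else v i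

open Filter Topology

/-!
In the coordinates of the chart `b_0`, every chart contributes bounded holomorphic approximants of
`f ∘ b_0` of each order `n` on some open set. On an overlap two of them differ by `O(|P ∘ b_0|^n)`
over a sector; restricting to complex lines shows that the difference is then divisible by
`(P ∘ b_0)^n` on the whole overlap, with holomorphic quotient `h`. A Cauchy integral in the first
variable splits `h` into bounded holomorphic functions on the two (shrunk) pieces, and correcting
the approximants by `(P ∘ b_0)^n` times these makes them agree. Gluing along rectangles covers any
bounded part of the exceptional divisor, gluing along an annulus adds the chart at infinity, and
Riemann's extension theorem carries the result down across `x_0 = 0`.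
-/

lemma interval_induction {p : ℝ → ℝ → Prop} {a b : ℝ} (hab : a ≤ b)
    (trans : ∀ x y z, x ≤ y → y ≤ z → p x y → p y z → p x z)
    (small : ∀ x ∈ Icc a b, ∃ ε > 0, ∀ u v, x - ε < u → u ≤ v → v < x + ε → p u v) :
    p a b := by
  choose! ε hε hp using small
  obtain ⟨t, ht0, hmono, ⟨m, hm⟩, hsub⟩ :=
    exists_monotone_Icc_subset_open_cover_Icc hab (c := fun x : Icc a b => Metric.ball x (ε x))
      (fun _ => Metric.isOpen_ball)
      fun x _ => mem_iUnion.2 ⟨x, Metric.mem_ball_self (hε x x.2)⟩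
  have step (n : ℕ) : p (t n) (t (n + 1)) := by
    obtain ⟨x, hx⟩ := hsub n
    have hle : t n ≤ t (n + 1) := hmono n.le_succ
    have hl := hx (left_mem_Icc.2 hle)
    have hr := hx (right_mem_Icc.2 hle)
    rw [Metric.mem_ball, Subtype.dist_eq, Real.dist_eq, abs_lt] at hl hr
    exact hp x x.2 _ _ (by linarith) hle (by linarith)
  have chain (n : ℕ) : p (t 0) (t (n + 1)) := by
    induction n with
    | zero => exact step 0
    | succ n ih => exact trans _ _ _ (hmono zero_le) (hmono (Nat.le_succ _)) ih (step (n + 1))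
  simpa only [ht0, hm (m + 1) (Nat.le_succ m)] using chain m

/-! ### Analyticity of integrals depending on a parameter -/

lemma eval_update_eq_update_eval {K ι G : Type*} [TopologicalSpace K] [TopologicalSpace G]
    [DecidableEq ι] (u : ι → C(K, G)) (i : ι) (z : C(K, G)) (s : K) :
    (fun j => Function.update u i z j s) = Function.update (fun j => u j s) i (z s) :=
  funext fun j => Function.apply_update (fun _ (w : C(K, G)) => w s) u i z j

section ParametricIntegral

variable {E F G : Type*} [NormedAddCommGroup E] [NormedSpace ℂ E] [NormedAddCommGroup F]
  [NormedSpace ℂ F] [NormedAddCommGroup G] [NormedSpace ℂ G]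

/-- The multilinear map `(u₁, …, uₙ) ↦ (s ↦ m (u₁ s, …, uₙ s))` between spaces of continuous
functions on a compact space, the `n`-th Taylor term of a superposition operator. -/
def superpositionTerm (K : Type*) [TopologicalSpace K] [CompactSpace K] {n : ℕ}
    (m : G [×n]→L[ℂ] F) : C(K, G) [×n]→L[ℂ] C(K, F) :=
  MultilinearMap.mkContinuous
    { toFun u := ⟨fun s => m fun i => u i s, by fun_prop⟩
      map_update_add' u i x y := by
        ext s
        simp [eval_update_eq_update_eval]
      map_update_smul' u i c x := by
        ext s
        simp [eval_update_eq_update_eval] }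
    ‖m‖ fun u => by
      refine (ContinuousMap.norm_le _ (by positivity)).2 fun s => (m.le_opNorm _).trans ?_
      gcongr with i
      exact (u i).norm_coe_le_norm s

lemma norm_superpositionTerm_le (K : Type*) [TopologicalSpace K] [CompactSpace K] {n : ℕ}
    (m : G [×n]→L[ℂ] F) : ‖superpositionTerm K m‖ ≤ ‖m‖ :=
  MultilinearMap.mkContinuous_norm_le _ (norm_nonneg _) _

lemma exists_analyticOnNhd_superposition (K : Type*) [TopologicalSpace K] [CompactSpace K]
    [CompleteSpace F] {f : G → F} {P : FormalMultilinearSeries ℂ G F} {c : G} {r : ENNReal}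
    (hf : HasFPowerSeriesOnBall f P c r) :
    ∃ N : C(K, G) → C(K, F), AnalyticOnNhd ℂ N (Metric.eball 0 r) ∧
      ∀ u ∈ Metric.eball (0 : C(K, G)) r, ∀ s, N u s = f (c + u s) := by
  let q : FormalMultilinearSeries ℂ C(K, G) C(K, F) := fun n => superpositionTerm K (P n)
  have hrad : r ≤ q.radius :=
    hf.r_le.trans <| FormalMultilinearSeries.radius_le_of_le fun n =>
      norm_superpositionTerm_le K (P n)
  have hq : HasFPowerSeriesOnBall q.sum q 0 r :=
    (q.hasFPowerSeriesOnBall (hf.r_pos.trans_le hrad)).mono hf.r_pos hrad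
  refine ⟨q.sum, hq.analyticOnNhd, fun u hu s => ?_⟩
  have hus : u s ∈ Metric.eball (0 : G) r := by
    rw [Metric.mem_eball, edist_zero_right] at hu ⊢
    exact lt_of_le_of_lt (enorm_le_iff_norm_le.2 (u.norm_coe_le_norm s)) hu
  have hsum := (ContinuousMap.evalCLM ℂ s).hasSum (hq.hasSum hu)
  rw [zero_add] at hsum
  exact hsum.unique (hf.hasSum hus)

/-- Integration of continuous functions on `[a, b]` against a continuous weight. -/
def weightedIntegralCLM {a b : ℝ} (hab : a ≤ b) (w : C(ℝ, ℂ)) : C(Icc a b, F) →L[ℂ] F :=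
  LinearMap.mkContinuousOfExistsBound
    { toFun φ := ∫ s in a..b, w s • φ (projIcc a b hab s)
      map_add' φ ψ := by
        simp only [ContinuousMap.add_apply, smul_add]
        exact intervalIntegral.integral_add
          (Continuous.intervalIntegrable (by fun_prop) _ _)
          (Continuous.intervalIntegrable (by fun_prop) _ _)
      map_smul' c φ := by
        simp only [ContinuousMap.smul_apply, smul_comm _ c, RingHom.id_apply]
        exact intervalIntegral.integral_smul c _ } <| by
    obtain ⟨C, hC⟩ := isCompact_Icc.exists_bound_of_continuousOn (s := Icc a b)
      w.continuous.continuousOn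
    refine ⟨C * |b - a|, fun φ => ?_⟩
    rw [mul_right_comm]
    refine intervalIntegral.norm_integral_le_of_norm_le_const fun s hs => ?_
    rw [uIoc_of_le hab] at hs
    rw [norm_smul]
    gcongr
    · exact (norm_nonneg _).trans (hC s (Ioc_subset_Icc_self hs))
    · exact hC s (Ioc_subset_Icc_self hs)
    · exact φ.norm_coe_le_norm _

variable [CompleteSpace F] {κ : G × E → F} {γ : ℝ → G} {p : E}

lemma analyticAt_integral_of_short (hγ : Continuous γ) (w : C(ℝ, ℂ)) {s₀ : ℝ}
    (hκ : AnalyticAt ℂ κ (γ s₀, p)) :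
    ∃ ε > 0, ∀ a b, s₀ - ε < a → a ≤ b → b < s₀ + ε →
      AnalyticAt ℂ (fun x => ∫ s in a..b, w s • κ (γ s, x)) p := by
  obtain ⟨P, r, hP⟩ := hκ
  obtain ⟨R, hR0, hRr⟩ := ENNReal.lt_iff_exists_nnreal_btwn.1 hP.r_pos
  have hR : (0 : ℝ) < R := by exact_mod_cast hR0
  obtain ⟨ε, hε, hγε⟩ := Metric.continuousAt_iff.1 (hγ.continuousAt (x := s₀)) R hR
  refine ⟨ε, hε, fun a b ha hab hb => ?_⟩
  obtain ⟨N, hN, hNκ⟩ := exists_analyticOnNhd_superposition (Icc a b) hP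
  let shift : E → C(Icc a b, G × E) := fun x => ⟨fun s => (γ s - γ s₀, x - p), by fun_prop⟩
  have hshift : AnalyticAt ℂ shift p := by
    have h : shift = fun x => shift p + ContinuousMap.const (Icc a b) (0, x - p) := by
      ext x s <;> simp [shift]
    rw [h]
    refine analyticAt_const.add ?_
    exact ((ContinuousLinearMap.const ℂ (Icc a b)).comp
      (ContinuousLinearMap.inr ℂ G E)).analyticAt (p - p) |>.fun_comp
        (f := fun x => x - p) (analyticAt_id.sub analyticAt_const)
  have hmem : shift p ∈ Metric.eball 0 r := by
    rw [Metric.mem_eball, edist_zero_right]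
    refine lt_of_le_of_lt (enorm_le_coe.2 ?_) hRr
    refine (ContinuousMap.norm_le _ hR.le).2 fun s => ?_
    have hs : dist (s : ℝ) s₀ < ε := by
      rw [Real.dist_eq, abs_lt]
      constructor <;> linarith [s.2.1, s.2.2]
    simpa [shift, Prod.norm_def, dist_eq_norm] using (hγε hs).le
  have hnear : ∀ᶠ x in 𝓝 p, shift x ∈ Metric.eball 0 r :=
    hshift.continuousAt.eventually (Metric.isOpen_eball.mem_nhds hmem)
  have hNshift : AnalyticAt ℂ (N ∘ shift) p := (hN _ hmem).comp hshift
  refine (((weightedIntegralCLM hab w).analyticAt _).comp hNshift).congr ?_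
  filter_upwards [hnear] with x hx
  refine intervalIntegral.integral_congr fun s hs => ?_
  rw [uIcc_of_le hab] at hs
  simp [hNκ _ hx, shift, projIcc_of_mem hab hs]

lemma eventually_intervalIntegrable {a b : ℝ} (hab : a ≤ b) (hγ : Continuous γ) (w : C(ℝ, ℂ))
    (hκ : ∀ s ∈ Icc a b, AnalyticAt ℂ κ (γ s, p)) :
    ∀ᶠ x in 𝓝 p, IntervalIntegrable (fun s => w s • κ (γ s, x)) MeasureTheory.volume a b := by
  have hcont : ∀ᶠ x in 𝓝 p, ∀ s ∈ Icc a b, ContinuousAt κ (γ s, x) :=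
    isCompact_Icc.eventually_forall_of_forall_eventually fun s hs =>
      (show ContinuousAt (fun z : E × ℝ => (γ z.2, z.1)) (p, s) by fun_prop).eventually
        ((hκ s hs).eventually_analyticAt.mono fun _ h => h.continuousAt)
  filter_upwards [hcont] with x hx
  refine ContinuousOn.intervalIntegrable fun s hs => ContinuousAt.continuousWithinAt ?_
  rw [uIcc_of_le hab] at hs
  exact w.continuous.continuousAt.smul ((hx s hs).comp (f := fun s => (γ s, x)) (by fun_prop))

lemma analyticAt_intervalIntegral {a b : ℝ} (hab : a ≤ b) (hγ : Continuous γ) (w : C(ℝ, ℂ))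
    (hκ : ∀ s ∈ Icc a b, AnalyticAt ℂ κ (γ s, p)) :
    AnalyticAt ℂ (fun x => ∫ s in a..b, w s • κ (γ s, x)) p := by
  let Good (u v : ℝ) : Prop := (∀ s ∈ Icc u v, AnalyticAt ℂ κ (γ s, p)) →
    AnalyticAt ℂ (fun x => ∫ s in u..v, w s • κ (γ s, x)) p
  refine interval_induction (p := Good) hab (fun x y z hxy hyz hleft hright hκ => ?_)
    (fun s hs => ?_) hκ
  · have hκ₁ (s) (hs : s ∈ Icc x y) := hκ s (Icc_subset_Icc_right hyz hs)
    have hκ₂ (s) (hs : s ∈ Icc y z) := hκ s (Icc_subset_Icc_left hxy hs)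
    refine ((hleft hκ₁).add (hright hκ₂)).congr ?_
    filter_upwards [eventually_intervalIntegrable hxy hγ w hκ₁,
      eventually_intervalIntegrable hyz hγ w hκ₂] with q hq hq'
    exact intervalIntegral.integral_add_adjacent_intervals hq hq'
  · obtain ⟨ε, hε, h⟩ := analyticAt_integral_of_short hγ w (hκ s hs)
    exact ⟨ε, hε, fun u v hu huv hv _ => h u v hu huv hv⟩

lemma analyticAt_circleIntegral {κ : ℂ × E → F} {c : ℂ} {R : ℝ} (hR : 0 ≤ R)
    (hκ : ∀ s ∈ Metric.sphere c R, AnalyticAt ℂ κ (s, p)) :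
    AnalyticAt ℂ (fun x => ∮ s in C(c, R), κ (s, x)) p :=
  analyticAt_intervalIntegral Real.two_pi_pos.le (continuous_circleMap c R)
    ⟨deriv (circleMap c R), by
      rw [funext (deriv_circleMap c R)]; fun_prop⟩
    fun s _ => hκ _ (circleMap_mem_sphere c hR s)

end ParametricIntegral

/-! ### Extension of analytic functions across a zero set -/

section Extension

variable {E F : Type*} [NormedAddCommGroup E] [NormedSpace ℂ E] [NormedAddCommGroup F]
  [NormedSpace ℂ F]

lemma mem_nhds_closure_of_mem_punctured_nhds {A : Set ℂ} {s : ℂ} (hA : A ∈ 𝓝[≠] s) :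
    closure A ∈ 𝓝 s := by
  have hs : s ∈ closure A := mem_closure_iff_frequently.2 <|
    (Filter.Eventually.frequently hA).filter_mono nhdsWithin_le_nhds
  filter_upwards [mem_nhdsWithin_iff_eventually.1 hA] with t ht
  by_cases hts : t = s
  · exact hts ▸ hs
  · exact subset_closure (ht hts)

lemma exists_analyticOnNhd_eqOn_of_local [CompleteSpace F] {Ω A : Set E} {k : E → F}
    (hA : ∀ p ∈ Ω, closure A ∈ 𝓝 p)
    (hloc : ∀ p ∈ Ω, ∃ φ, AnalyticAt ℂ φ p ∧ φ =ᶠ[𝓝[A] p] k) :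
    ∃ Φ, AnalyticOnNhd ℂ Φ Ω ∧ EqOn Φ k (Ω ∩ A) := by
  have lim_eq {φ : E → F} {q : E} (hq : q ∈ closure A) (hφ : ContinuousAt φ q)
      (hφk : φ =ᶠ[𝓝[A] q] k) : limUnder (𝓝[A] q) k = φ q := by
    have := mem_closure_iff_nhdsWithin_neBot.1 hq
    exact ((hφ.tendsto.mono_left nhdsWithin_le_nhds).congr' hφk).limUnder_eq
  refine ⟨fun q => limUnder (𝓝[A] q) k, fun p hp => ?_, fun p hp => ?_⟩
  · obtain ⟨φ, hφ, hφk⟩ := hloc p hp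
    refine hφ.congr ?_
    filter_upwards [hA p hp, hφ.eventually_analyticAt, eventually_nhds_nhdsWithin.2 hφk]
      with q hq hφq hφkq
    exact (lim_eq hq hφq.continuousAt hφkq).symm
  · obtain ⟨φ, hφ, hφk⟩ := hloc p hp.1
    exact (lim_eq (subset_closure hp.2) hφ.continuousAt hφk).trans
      (hφk.self_of_nhdsWithin hp.2)

lemma eventually_ne_zero_of_isPreconnected {f : ℂ → ℂ} {U : Set ℂ}
    (hf : AnalyticOnNhd ℂ f U) (hU : IsPreconnected U) {s₀ : ℂ} (hs₀ : s₀ ∈ U) (hne : f s₀ ≠ 0)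
    {s : ℂ} (hs : s ∈ U) : ∀ᶠ t in 𝓝[≠] s, f t ≠ 0 := by
  by_contra h
  exact hne (hf.eqOn_zero_of_preconnected_of_frequently_eq_zero hU hs (not_eventually.1 h |>.mono
    fun _ => not_not.1) hs₀)

/-- `k` extends analytically across the zero set of `Q` along every complex line on which `Q` is
not identically zero. -/
def ExtendsAlongLines (k Q : E → ℂ) (Ω : Set E) : Prop :=
  ∀ z ∈ Ω, Q z = 0 → ∀ e : E, (∀ᶠ s in 𝓝[≠] (0 : ℂ), Q (z + s • e) ≠ 0) →
    ∃ φ : ℂ → ℂ, AnalyticAt ℂ φ 0 ∧ φ =ᶠ[𝓝[≠] 0] fun s => k (z + s • e)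

variable {Ω : Set E} {Q k : E → ℂ}

lemma ExtendsAlongLines.exists_analyticAt (hlines : ExtendsAlongLines k Q Ω)
    (hk : AnalyticOnNhd ℂ k (Ω ∩ {z | Q z ≠ 0})) {z e : E} {s : ℂ} (hs : z + s • e ∈ Ω)
    (hne : ∀ᶠ t in 𝓝[≠] s, Q (z + t • e) ≠ 0) :
    ∃ φ : ℂ → ℂ, AnalyticAt ℂ φ s ∧
      φ =ᶠ[𝓝[{t | Q (z + t • e) ≠ 0}] s] fun t => k (z + t • e) := by
  by_cases hQs : Q (z + s • e) = 0
  · have translate (a c : ℂ) : Tendsto (fun t => t + c) (𝓝[≠] a) (𝓝[≠] (a + c)) :=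
      tendsto_nhdsWithin_of_tendsto_nhds_of_eventually_within _
        ((continuous_add_const c).tendsto a |>.mono_left nhdsWithin_le_nhds)
        (eventually_mem_nhdsWithin.mono fun t ht => (add_left_injective c).ne ht)
    have hline (t : ℂ) : z + s • e + t • e = z + (t + s) • e := by module
    obtain ⟨φ, hφ, hφk⟩ := hlines _ hs hQs e <| by
      simp only [hline]
      exact (translate 0 s).eventually (by rwa [zero_add])
    refine ⟨fun t => φ (t + -s), hφ.comp_of_eq (by fun_prop) (add_neg_cancel s), ?_⟩
    have hpunct : ∀ᶠ t in 𝓝[≠] s, φ (t + -s) = k (z + s • e + (t + -s) • e) :=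
      (translate s (-s)).eventually (by rwa [add_neg_cancel])
    simp only [hline, neg_add_cancel_right] at hpunct
    have hsub : {t | Q (z + t • e) ≠ 0} ⊆ {s}ᶜ := by
      rintro _ ht rfl
      exact ht hQs
    exact hpunct.filter_mono (nhdsWithin_mono s hsub)
  · refine ⟨fun t => k (z + t • e), ?_, EventuallyEq.rfl⟩
    exact (hk _ ⟨hs, hQs⟩).comp_of_eq (f := fun t : ℂ => z + t • e) (by fun_prop) rfl

lemma ExtendsAlongLines.circleIntegral_eq (hlines : ExtendsAlongLines k Q Ω)
    (hQ : AnalyticOnNhd ℂ Q Ω) (hk : AnalyticOnNhd ℂ k (Ω ∩ {z | Q z ≠ 0})) {z e : E} {R : ℝ}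
    (hR : 0 < R)
    (hΩ : ∀ s ∈ Metric.closedBall (0 : ℂ) R, z + s • e ∈ Ω)
    (hsphere : ∀ s ∈ Metric.sphere (0 : ℂ) R, Q (z + s • e) ≠ 0) (hz : Q z ≠ 0) :
    ∮ s in C(0, R), s⁻¹ * k (z + s • e) = 2 * Real.pi * I * k z := by
  have hA (s : ℂ) (hs : s ∈ Metric.closedBall (0 : ℂ) R) :
      ∀ᶠ t in 𝓝[≠] s, Q (z + t • e) ≠ 0 :=
    eventually_ne_zero_of_isPreconnected
      (fun t ht => (hQ _ (hΩ t ht)).comp_of_eq (f := fun t : ℂ => z + t • e) (by fun_prop) rfl)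
      (convex_closedBall (0 : ℂ) R).isPreconnected (Metric.mem_closedBall_self hR.le)
      (by simpa using hz) hs
  obtain ⟨Φ, hΦ, hΦk⟩ := exists_analyticOnNhd_eqOn_of_local (Ω := Metric.closedBall (0 : ℂ) R)
    (A := {t | Q (z + t • e) ≠ 0}) (k := fun t => k (z + t • e))
    (fun s hs => mem_nhds_closure_of_mem_punctured_nhds (hA s hs))
    fun s hs => hlines.exists_analyticAt hk (hΩ s hs) (hA s hs)
  have hΦcl : DiffContOnCl ℂ Φ (Metric.ball 0 R) := by
    refine DifferentiableOn.diffContOnCl ?_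
    rw [closure_ball _ hR.ne']
    exact hΦ.differentiableOn
  have hcauchy := hΦcl.circleIntegral_sub_inv_smul (Metric.mem_ball_self hR)
  have hΦ0 : Φ 0 = k z := by
    simpa using hΦk ⟨Metric.mem_closedBall_self hR.le, by simpa using hz⟩
  rw [hΦ0, smul_eq_mul] at hcauchy
  rw [← hcauchy]
  refine circleIntegral.integral_congr hR.le fun s hs => ?_
  have hs' := hΦk ⟨Metric.sphere_subset_closedBall hs, hsphere s hs⟩
  simp only [sub_zero, smul_eq_mul, hs']

lemma exists_line_ne_zero (hΩ : IsOpen Ω) (hQ : AnalyticOnNhd ℂ Q Ω) {p : E} (hp : p ∈ Ω)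
    (hne : ∃ᶠ z in 𝓝 p, Q z ≠ 0) :
    ∃ e : E, ∃ R > 0, (∀ s ∈ Metric.closedBall (0 : ℂ) R, p + s • e ∈ Ω) ∧
      ∀ s ∈ Metric.sphere (0 : ℂ) R, Q (p + s • e) ≠ 0 := by
  obtain ⟨ε, hε, hball⟩ := Metric.isOpen_iff.1 hΩ p hp
  obtain ⟨q, hq0, hq⟩ := (hne.and_eventually (Metric.ball_mem_nhds p hε)).exists
  have hdisk (s : ℂ) (hs : s ∈ Metric.closedBall (0 : ℂ) 1) : p + s • (q - p) ∈ Ω := by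
    refine hball ?_
    rw [mem_ball_iff_norm, add_sub_cancel_left, norm_smul]
    rw [mem_closedBall_zero_iff] at hs
    exact (mul_le_of_le_one_left (norm_nonneg _) hs).trans_lt (mem_ball_iff_norm.1 hq)
  have hpunct : ∀ᶠ s in 𝓝[≠] (0 : ℂ), Q (p + s • (q - p)) ≠ 0 :=
    eventually_ne_zero_of_isPreconnected
      (fun s hs => (hQ _ (hdisk s hs)).comp_of_eq (f := fun s : ℂ => p + s • (q - p))
        (by fun_prop) rfl)
      (convex_closedBall (0 : ℂ) 1).isPreconnected (s₀ := 1) (by simp) (by simpa using hq0)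
      (Metric.mem_closedBall_self zero_le_one)
  obtain ⟨δ, hδ, hδQ⟩ := Metric.eventually_nhds_iff.1 (eventually_nhdsWithin_iff.1 hpunct)
  have hmin : 0 < min 1 (δ / 2) := by positivity
  refine ⟨q - p, min 1 (δ / 2), hmin, fun s hs => hdisk s
    (Metric.closedBall_subset_closedBall (min_le_left _ _) hs), fun s hs => hδQ ?_
    (ne_zero_of_mem_sphere hmin.ne' ⟨s, hs⟩)⟩
  rw [Metric.mem_sphere.1 hs]
  exact (min_le_right _ _).trans_lt (half_lt_self hδ)

theorem exists_analyticOnNhd_of_extendsAlongLines (hΩ : IsOpen Ω) (hQ : AnalyticOnNhd ℂ Q Ω)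
    (hne : ∀ p ∈ Ω, ∃ᶠ z in 𝓝 p, Q z ≠ 0) (hk : AnalyticOnNhd ℂ k (Ω ∩ {z | Q z ≠ 0}))
    (hlines : ExtendsAlongLines k Q Ω) :
    ∃ Φ, AnalyticOnNhd ℂ Φ Ω ∧ EqOn Φ k (Ω ∩ {z | Q z ≠ 0}) := by
  refine exists_analyticOnNhd_eqOn_of_local (fun p hp => ?_) fun p hp => ?_
  · exact mem_of_superset (hΩ.mem_nhds hp) fun q hq => mem_closure_iff_frequently.2 (hne q hq)
  obtain ⟨e, R, hR, hdisk, hsphere⟩ := exists_line_ne_zero hΩ hQ hp (hne p hp)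
  have hline : Continuous fun zs : E × ℂ => zs.1 + zs.2 • e := by fun_prop
  have hdisk' : ∀ᶠ z in 𝓝 p, ∀ s ∈ Metric.closedBall (0 : ℂ) R, z + s • e ∈ Ω :=
    (isCompact_closedBall (0 : ℂ) R).eventually_forall_of_forall_eventually fun s hs =>
      hline.continuousAt.eventually (hΩ.mem_nhds (hdisk s hs))
  have hsphere' : ∀ᶠ z in 𝓝 p, ∀ s ∈ Metric.sphere (0 : ℂ) R, Q (z + s • e) ≠ 0 :=
    (isCompact_sphere (0 : ℂ) R).eventually_forall_of_forall_eventually fun s hs =>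
      (hline.tendsto (p, s)).eventually <|
        (hQ _ (hdisk s (Metric.sphere_subset_closedBall hs))).continuousAt.eventually_ne
          (hsphere s hs)
  refine ⟨fun z => (2 * Real.pi * I)⁻¹ * ∮ s in C(0, R), s⁻¹ * k (z + s • e), ?_, ?_⟩
  · refine analyticAt_const.mul (analyticAt_circleIntegral
      (κ := fun sz : ℂ × E => sz.1⁻¹ * k (sz.2 + sz.1 • e)) hR.le fun s hs => ?_)
    have hs0 : s ≠ 0 := ne_zero_of_mem_sphere hR.ne' ⟨s, hs⟩
    refine (analyticAt_fst.inv hs0).mul (AnalyticAt.fun_comp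
      (hk _ ⟨hdisk s (Metric.sphere_subset_closedBall hs), hsphere s hs⟩)
      (analyticAt_snd.add (analyticAt_fst.smul analyticAt_const)))
  · filter_upwards [nhdsWithin_le_nhds hdisk', nhdsWithin_le_nhds hsphere', self_mem_nhdsWithin]
      with z hz hz' hzQ
    rw [hlines.circleIntegral_eq hQ hk hR hz hz' hzQ, inv_mul_cancel_left₀ two_pi_I_ne_zero]

lemma eventually_add_smul_mem (hΩ : IsOpen Ω) {z : E} (hz : z ∈ Ω) (e : E) :
    ∀ᶠ s in 𝓝[≠] (0 : ℂ), z + s • e ∈ Ω := by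
  have hline : Continuous fun s : ℂ => z + s • e := by fun_prop
  exact eventually_nhdsWithin_of_eventually_nhds
    (hline.tendsto' 0 z (by simp) |>.eventually (hΩ.mem_nhds hz))

lemma exists_analyticOnNhd_of_bounded (hΩ : IsOpen Ω) (hQ : AnalyticOnNhd ℂ Q Ω)
    (hne : ∀ p ∈ Ω, ∃ᶠ z in 𝓝 p, Q z ≠ 0) (hk : AnalyticOnNhd ℂ k (Ω ∩ {z | Q z ≠ 0})) {M : ℝ}
    (hM : ∀ z ∈ Ω ∩ {z | Q z ≠ 0}, ‖k z‖ ≤ M) :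
    ∃ Φ, AnalyticOnNhd ℂ Φ Ω ∧ EqOn Φ k (Ω ∩ {z | Q z ≠ 0}) := by
  refine exists_analyticOnNhd_of_extendsAlongLines hΩ hQ hne hk fun z hz _ e hpunct => ?_
  have hnear : ∀ᶠ s in 𝓝[≠] (0 : ℂ), z + s • e ∈ Ω ∩ {z | Q z ≠ 0} :=
    (eventually_add_smul_mem hΩ hz e).and hpunct
  obtain ⟨U, hU, hUΩ⟩ := mem_nhdsWithin_iff_exists_mem_nhds_inter.1 hnear
  have hdiff := differentiableOn_update_limUnder_of_bddAbove
    (f := fun s : ℂ => k (z + s • e)) hU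
    (fun s hs => ((hk _ (hUΩ hs)).comp_of_eq (f := fun s : ℂ => z + s • e) (by fun_prop)
      rfl).differentiableAt.differentiableWithinAt)
    ⟨M, forall_mem_image.2 fun s hs => hM _ (hUΩ hs)⟩
  refine ⟨_, hdiff.analyticAt hU, ?_⟩
  filter_upwards [self_mem_nhdsWithin] with s hs using Function.update_of_ne hs _ _

lemma exists_analyticAt_of_meromorphicAt_of_frequently_bounded {m : ℂ → ℂ} {s₀ : ℂ}
    (hm : MeromorphicAt m s₀) {C : ℝ} (hC : ∃ᶠ s in 𝓝[≠] s₀, ‖m s‖ ≤ C) :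
    ∃ φ : ℂ → ℂ, AnalyticAt ℂ φ s₀ ∧ φ =ᶠ[𝓝[≠] s₀] m := by
  refine ⟨toMeromorphicNFAt m s₀, ?_, hm.eq_nhdsNE_toMeromorphicNFAt.symm⟩
  rw [← hm.meromorphicOrderAt_nonneg_iff_analyticAt_toMeromorphicNFAt, ← not_lt,
    ← tendsto_cobounded_iff_meromorphicOrderAt_neg hm, ← tendsto_norm_atTop_iff_cobounded]
  intro htop
  exact hC ((htop.eventually_gt_atTop C).mono fun s hs => hs.not_ge)

/-- The open sector of complex numbers with some argument in `(α, β)`. -/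
def angularSector (α β : ℝ) : Set ℂ :=
  {w | w ≠ 0 ∧ ∃ θ ∈ Ioo α β, w = (‖w‖ : ℂ) * exp (θ * I)}

lemma angularSector_eq_image_exp (α β : ℝ) :
    angularSector α β = exp '' (im ⁻¹' Ioo α β) := by
  ext w
  constructor
  · rintro ⟨hw, θ, hθ, hwθ⟩
    refine ⟨Real.log ‖w‖ + θ * I, by simpa using hθ, ?_⟩
    rw [exp_add, ← ofReal_exp, Real.exp_log (norm_pos_iff.2 hw), ← hwθ]
  · rintro ⟨z, hz, rfl⟩
    refine ⟨exp_ne_zero z, z.im, hz, ?_⟩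
    rw [norm_exp, ofReal_exp, ← exp_add, re_add_im]

lemma isOpen_angularSector (α β : ℝ) : IsOpen (angularSector α β) := by
  rw [angularSector_eq_image_exp]
  exact isOpenMap_exp _ (isOpen_Ioo.preimage continuous_im)

lemma zero_mem_closure_angularSector {α β : ℝ} (h : α < β) :
    (0 : ℂ) ∈ closure (angularSector α β) := by
  obtain ⟨θ, hθ⟩ := exists_between h
  have htendsto : Tendsto (fun x : ℝ => exp (x + θ * I)) atBot (𝓝 0) :=
    tendsto_exp_nhds_zero_iff.2 (by simpa using! tendsto_id)
  refine mem_closure_of_tendsto htendsto (Eventually.of_forall fun x => ?_)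
  rw [angularSector_eq_image_exp]
  exact mem_image_of_mem _ (by simpa using hθ)

lemma frequently_mem_angularSector {α β : ℝ} (h : α < β) {q : ℂ → ℂ} {s₀ : ℂ}
    (hq : AnalyticAt ℂ q s₀) (hq₀ : q s₀ = 0) (hne : ∀ᶠ s in 𝓝[≠] s₀, q s ≠ 0) :
    ∃ᶠ s in 𝓝[≠] s₀, q s ∈ angularSector α β := by
  have hopen : 𝓝 0 ≤ map q (𝓝 s₀) := by
    rcases hq.eventually_constant_or_nhds_le_map_nhds with hconst | hmap
    · have hzero : ∀ᶠ s in 𝓝[≠] s₀, q s = 0 :=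
        eventually_nhdsWithin_of_eventually_nhds (by simpa only [hq₀] using hconst)
      exact ((hne.and hzero).exists.elim fun _ hs => hs.1 hs.2).elim
    · rwa [hq₀] at hmap
  have hfreq : ∃ᶠ s in 𝓝 s₀, q s ∈ angularSector α β :=
    frequently_map.1 <|
      (mem_closure_iff_frequently.1 (zero_mem_closure_angularSector h)).filter_mono hopen
  rw [frequently_nhdsWithin_iff]
  refine hfreq.mono fun s hs => ⟨hs, fun hss => hs.1 ?_⟩
  rw [mem_singleton_iff.1 hss, hq₀]

lemma extendsAlongLines_div_pow (hΩ : IsOpen Ω) (hQ : AnalyticOnNhd ℂ Q Ω) {g : E → ℂ}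
    (hg : AnalyticOnNhd ℂ g Ω) {α β C : ℝ} (hαβ : α < β) {n : ℕ}
    (hgQ : ∀ z ∈ Ω, Q z ∈ angularSector α β → ‖g z‖ ≤ C * ‖Q z‖ ^ n) :
    ExtendsAlongLines (fun z => g z / Q z ^ n) Q Ω := by
  intro z hz hQz e hpunct
  have hQe : AnalyticAt ℂ (fun s : ℂ => Q (z + s • e)) 0 :=
    (hQ z hz).comp_of_eq (f := fun s : ℂ => z + s • e) (by fun_prop) (by simp)
  have hge : AnalyticAt ℂ (fun s : ℂ => g (z + s • e)) 0 :=
    (hg z hz).comp_of_eq (f := fun s : ℂ => z + s • e) (by fun_prop) (by simp)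
  refine exists_analyticAt_of_meromorphicAt_of_frequently_bounded (C := C)
    (hge.meromorphicAt.div (hQe.meromorphicAt.pow n)) ?_
  refine ((frequently_mem_angularSector hαβ hQe (by simpa using hQz) hpunct).and_eventually
    (eventually_add_smul_mem hΩ hz e)).mono fun s hs => ?_
  rw [norm_div, norm_pow, div_le_iff₀ (pow_pos (norm_pos_iff.2 hs.1.1) n)]
  exact hgQ _ hs.2 hs.1

theorem exists_eq_pow_mul_of_norm_le_on_angularSector (hΩ : IsOpen Ω)
    (hQ : AnalyticOnNhd ℂ Q Ω) (hne : ∀ p ∈ Ω, ∃ᶠ z in 𝓝 p, Q z ≠ 0) {g : E → ℂ}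
    (hg : AnalyticOnNhd ℂ g Ω) {α β C : ℝ} (hαβ : α < β) {n : ℕ}
    (hgQ : ∀ z ∈ Ω, Q z ∈ angularSector α β → ‖g z‖ ≤ C * ‖Q z‖ ^ n) :
    ∃ h, AnalyticOnNhd ℂ h Ω ∧ ∀ z ∈ Ω, g z = Q z ^ n * h z := by
  obtain ⟨h, hh, hhQ⟩ := exists_analyticOnNhd_of_extendsAlongLines hΩ hQ hne
    (fun z hz => (hg z hz.1).div ((hQ z hz.1).pow n) (pow_ne_zero n hz.2))
    (extendsAlongLines_div_pow hΩ hQ hg hαβ hgQ)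
  refine ⟨h, hh, fun z hz => tendsto_nhds_unique_of_frequently_eq (hg z hz).continuousAt
    (((hQ z hz).pow n).mul (hh z hz)).continuousAt ?_⟩
  refine ((hne z hz).and_eventually (hΩ.mem_nhds hz)).mono fun w hw => ?_
  simp only [Pi.mul_apply, Pi.pow_apply, Pi.div_apply, hhQ ⟨hw.2, hw.1⟩]
  exact (mul_div_cancel₀ _ (pow_ne_zero n hw.1)).symm

end Extension

/-! ### Cauchy contours -/

/-- A parametrized curve in `ℂ` with a weight. The weight is the derivative of the curve or, for a
curve run backwards, its negative. -/
structure ContourPiece where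
  curve : C(ℝ, ℂ)
  weight : C(ℝ, ℂ)
  lo : ℝ
  hi : ℝ
  lo_le_hi : lo ≤ hi

namespace ContourPiece

/-- The set of points through which a contour piece passes. -/
def trace (γ : ContourPiece) : Set ℂ :=
  γ.curve '' Icc γ.lo γ.hi

/-- The integral of a function along a contour piece. -/
def integral (γ : ContourPiece) (φ : ℂ → ℂ) : ℂ :=
  ∫ s in γ.lo..γ.hi, γ.weight s • φ (γ.curve s)

variable {γ : ContourPiece} {φ ψ : ℂ → ℂ}

lemma isCompact_trace (γ : ContourPiece) : IsCompact γ.trace :=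
  isCompact_Icc.image γ.curve.continuous

lemma integral_congr (h : EqOn φ ψ γ.trace) : γ.integral φ = γ.integral ψ := by
  refine intervalIntegral.integral_congr fun s hs => ?_
  rw [uIcc_of_le γ.lo_le_hi] at hs
  simp only [h (mem_image_of_mem _ hs)]

lemma intervalIntegrable (hφ : ContinuousOn φ γ.trace) :
    IntervalIntegrable (fun s => γ.weight s • φ (γ.curve s)) MeasureTheory.volume γ.lo γ.hi := by
  refine ContinuousOn.intervalIntegrable ?_
  rw [uIcc_of_le γ.lo_le_hi]
  exact γ.weight.continuous.continuousOn.smul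
    (hφ.comp γ.curve.continuous.continuousOn (mapsTo_image _ _))

lemma integral_sub (hφ : ContinuousOn φ γ.trace) (hψ : ContinuousOn ψ γ.trace) :
    γ.integral (fun w => φ w - ψ w) = γ.integral φ - γ.integral ψ := by
  simp only [integral, smul_sub]
  exact intervalIntegral.integral_sub (intervalIntegrable hφ) (intervalIntegrable hψ)

lemma integral_mul_const (φ : ℂ → ℂ) (c : ℂ) :
    γ.integral (fun w => φ w * c) = γ.integral φ * c := by
  simp only [integral, smul_eq_mul, ← mul_assoc, intervalIntegral.integral_mul_const]

lemma exists_norm_integral_le (γ : ContourPiece) :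
    ∃ L, ∀ φ : ℂ → ℂ, ∀ M, (∀ w ∈ γ.trace, ‖φ w‖ ≤ M) → ‖γ.integral φ‖ ≤ L * M := by
  obtain ⟨B, hB⟩ := isCompact_Icc.exists_bound_of_continuousOn (s := Icc γ.lo γ.hi)
    γ.weight.continuous.continuousOn
  have hB0 : 0 ≤ B := (norm_nonneg _).trans (hB _ (left_mem_Icc.2 γ.lo_le_hi))
  refine ⟨B * |γ.hi - γ.lo|, fun φ M hM => ?_⟩
  rw [mul_right_comm]
  refine intervalIntegral.norm_integral_le_of_norm_le_const fun s hs => ?_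
  rw [uIoc_of_le γ.lo_le_hi] at hs
  have hs' := Ioc_subset_Icc_self hs
  rw [norm_smul]
  exact mul_le_mul (hB s hs') (hM _ (mem_image_of_mem _ hs')) (norm_nonneg _) hB0

end ContourPiece

/-- The pieces `Γ` form a cycle in the open set `U` for which Cauchy's theorem holds in `U`, and
which winds once around each point of `W`. -/
structure IsCauchyContour {κ : Type*} [Fintype κ] (Γ : κ → ContourPiece) (U W : Set ℂ) : Prop where
  isOpen : IsOpen U
  subset : W ⊆ U
  trace_subset : ∀ k, (Γ k).trace ⊆ U
  disjoint : ∀ k, Disjoint (Γ k).trace W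
  sum_integral_eq_zero : ∀ ψ : ℂ → ℂ, DifferentiableOn ℂ ψ U → ∑ k, (Γ k).integral ψ = 0
  sum_integral_sub_inv : ∀ t ∈ W, ∑ k, (Γ k).integral (fun w => (w - t)⁻¹) = 2 * Real.pi * I

lemma IsCauchyContour.sum_integral_sub_inv_mul {κ : Type*} [Fintype κ] {Γ : κ → ContourPiece}
    {U W : Set ℂ} (hΓ : IsCauchyContour Γ U W) {φ : ℂ → ℂ} (hφ : DifferentiableOn ℂ φ U) {t : ℂ}
    (ht : t ∈ W) :
    ∑ k, (Γ k).integral (fun w => (w - t)⁻¹ * φ w) = 2 * Real.pi * I * φ t := by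
  have hdslope : DifferentiableOn ℂ (dslope φ t) U :=
    (differentiableOn_dslope (hΓ.isOpen.mem_nhds (hΓ.subset ht))).2 hφ
  have hpiece (k : κ) : (Γ k).integral (dslope φ t) =
      (Γ k).integral (fun w => (w - t)⁻¹ * φ w) -
        (Γ k).integral (fun w => (w - t)⁻¹) * φ t := by
    have hne (w) (hw : w ∈ (Γ k).trace) : w ≠ t := fun h =>
      disjoint_left.1 (hΓ.disjoint k) hw (h ▸ ht)
    have hinv : ContinuousOn (fun w => (w - t)⁻¹) (Γ k).trace :=
      ContinuousOn.inv₀ (by fun_prop) fun w hw => sub_ne_zero.2 (hne w hw)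
    rw [← ContourPiece.integral_mul_const]
    refine Eq.trans (ContourPiece.integral_congr fun w hw => ?_) <| ContourPiece.integral_sub
      (hinv.mul (hφ.continuousOn.mono (hΓ.trace_subset k))) (hinv.mul continuousOn_const)
    rw [dslope_of_ne _ (hne w hw), slope_def_field, div_eq_inv_mul, mul_sub]
  have hzero := hΓ.sum_integral_eq_zero _ hdslope
  simp only [hpiece, Finset.sum_sub_distrib, ← Finset.sum_mul,
    hΓ.sum_integral_sub_inv t ht] at hzero
  exact sub_eq_zero.1 hzero

section Rectangle

/-- The line `s ↦ z + s * u` over `[a, b]`, with constant weight `c`. -/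
def linePiece (z u c : ℂ) {a b : ℝ} (hab : a ≤ b) : ContourPiece where
  curve := ⟨fun s => z + s * u, by fun_prop⟩
  weight := .const ℝ c
  lo := a
  hi := b
  lo_le_hi := hab

lemma linePiece_integral (z u c : ℂ) {a b : ℝ} (hab : a ≤ b) (φ : ℂ → ℂ) :
    (linePiece z u c hab).integral φ = c * ∫ s in a..b, φ (z + s * u) :=
  intervalIntegral.integral_const_mul _ _

lemma mul_integral_inv_line_eq_log_sub_log {z u m : ℂ} {a b : ℝ} (hab : a ≤ b)
    (hm : ∀ s ∈ Icc a b, 0 < (m * (z + s * u)).re) :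
    u * ∫ s in a..b, (z + (s : ℂ) * u)⁻¹ = log (m * (z + b * u)) - log (m * (z + a * u)) := by
  have hne (s) (hs : s ∈ Icc a b) : m * (z + s * u) ≠ 0 := fun h => by
    simpa [h] using hm s hs
  have hm0 : m ≠ 0 := left_ne_zero_of_mul (hne a (left_mem_Icc.2 hab))
  rw [← intervalIntegral.integral_const_mul]
  refine intervalIntegral.integral_eq_sub_of_hasDerivAt
    (f := fun s : ℝ => log (m * (z + s * u))) (fun s hs => ?_) ?_
  · rw [uIcc_of_le hab] at hs
    have hderiv : HasDerivAt (fun s : ℝ => m * (z + (s : ℂ) * u)) (m * (1 * u)) s :=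
      (((ofRealCLM.hasDerivAt (x := s)).mul_const u).const_add z).const_mul m
    have hlog := hderiv.clog_real (Or.inl (hm s hs))
    rwa [one_mul, mul_div_mul_left _ _ hm0, div_eq_mul_inv] at hlog
  · rw [← uIcc_of_le hab] at hne
    exact ContinuousOn.intervalIntegrable <| continuousOn_const.mul <|
      ContinuousOn.inv₀ (by fun_prop) fun s hs => right_ne_zero_of_mul (hne s hs)

lemma log_sub_log_neg_I_mul {w : ℂ} (hre : 0 < w.re) (him : 0 < w.im) :
    log w - log (-I * w) = Real.pi / 2 * I := by
  have hw : w ≠ 0 := fun h => by simp [h] at hre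
  have harg : 0 ≤ w.arg := arg_nonneg_iff.2 him.le
  have hlog : log (-I * w) = log (-I) + log w := by
    rw [log_mul_eq_add_log_iff (by simp) hw, arg_neg_I]
    constructor <;> linarith [Real.pi_pos, arg_le_pi w]
  rw [hlog, log_neg_I]
  ring

variable {x₀ x₁ y₀ y₁ : ℝ}

/-- The boundary of the rectangle `[x₀, x₁] × [y₀, y₁]`, run counterclockwise from the lower left
corner. -/
def rectangleContour (hx : x₀ ≤ x₁) (hy : y₀ ≤ y₁) : Fin 4 → ContourPiece :=
  ![linePiece (y₀ * I) 1 1 hx, linePiece x₁ I I hy, linePiece (y₁ * I) 1 (-1) hx,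
    linePiece x₀ I (-I) hy]

lemma sum_integral_rectangleContour (hx : x₀ ≤ x₁) (hy : y₀ ≤ y₁) (φ : ℂ → ℂ) :
    ∑ k, (rectangleContour hx hy k).integral φ =
      (∫ s in x₀..x₁, φ (s + y₀ * I)) - (∫ s in x₀..x₁, φ (s + y₁ * I)) +
        I * (∫ s in y₀..y₁, φ (x₁ + s * I)) - I * ∫ s in y₀..y₁, φ (x₀ + s * I) := by
  simp only [rectangleContour, Fin.sum_univ_four, Matrix.cons_val, linePiece_integral, mul_one,
    add_comm (_ * I) (_ : ℂ)]
  ring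

-- Each side lies in a half plane seen from `t`; passing from one side to the next rotates the half
-- plane by a quarter turn, and the branches of the logarithm then differ by `π / 2 * I`.
lemma sum_integral_rectangleContour_sub_inv (hx : x₀ ≤ x₁) (hy : y₀ ≤ y₁) {t : ℂ}
    (ht : t ∈ Ioo x₀ x₁ ×ℂ Ioo y₀ y₁) :
    ∑ k, (rectangleContour hx hy k).integral (fun w => (w - t)⁻¹) = 2 * Real.pi * I := by
  obtain ⟨⟨hx₀, hx₁⟩, hy₀, hy₁⟩ := ht
  have bottom := mul_integral_inv_line_eq_log_sub_log (z := y₀ * I - t) (u := 1) (m := I) hx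
    fun s _ => by simpa using hy₀
  have right := mul_integral_inv_line_eq_log_sub_log (z := x₁ - t) (u := I) (m := 1) hy
    fun s _ => by simpa using hx₁
  have top := mul_integral_inv_line_eq_log_sub_log (z := y₁ * I - t) (u := 1) (m := -I) hx
    fun s _ => by simpa using hy₁
  have left := mul_integral_inv_line_eq_log_sub_log (z := x₀ - t) (u := I) (m := -1) hy
    fun s _ => by simpa using hx₀
  have corner₁ := log_sub_log_neg_I_mul (w := I * (x₁ + y₀ * I - t)) (by simpa) (by simpa)
  have corner₂ := log_sub_log_neg_I_mul (w := x₁ + y₁ * I - t) (by simpa) (by simpa)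
  have corner₃ := log_sub_log_neg_I_mul (w := -I * (x₀ + y₁ * I - t)) (by simpa) (by simpa)
  have corner₄ := log_sub_log_neg_I_mul (w := -1 * (x₀ + y₀ * I - t)) (by simpa) (by simpa)
  have hhor (y s : ℝ) : (y * I - t) + s * 1 = s + y * I - t := by ring
  have hver (x s : ℝ) : (x - t) + s * I = x + s * I - t := by ring
  have hI : -I * I = 1 := by simp
  have hII : -I * -I = -1 := by simp
  have hI1 : -I * -1 = I := by ring
  rw [sum_integral_rectangleContour]
  simp only [hhor, hver, one_mul] at bottom right top left
  simp only [← mul_assoc, hI, hII, hI1, one_mul] at corner₁ corner₂ corner₃ corner₄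
  linear_combination bottom + right - top - left + corner₁ + corner₂ + corner₃ + corner₄

lemma isCauchyContour_rectangleContour (hx : x₀ ≤ x₁) (hy : y₀ ≤ y₁) {U : Set ℂ} (hU : IsOpen U)
    (hrect : Icc x₀ x₁ ×ℂ Icc y₀ y₁ ⊆ U) :
    IsCauchyContour (rectangleContour hx hy) U (Ioo x₀ x₁ ×ℂ Ioo y₀ y₁) where
  isOpen := hU
  subset t ht := hrect ⟨Ioo_subset_Icc_self ht.1, Ioo_subset_Icc_self ht.2⟩
  trace_subset k := by
    rintro _ ⟨s, hs, rfl⟩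
    refine hrect ?_
    fin_cases k <;> simpa [rectangleContour, linePiece, mem_reProdIm, hx, hy] using hs
  disjoint k := by
    rw [disjoint_left]
    rintro _ ⟨s, hs, rfl⟩ hmem
    fin_cases k <;> simp [rectangleContour, linePiece, mem_reProdIm] at hmem
  sum_integral_eq_zero ψ hψ := by
    rw [sum_integral_rectangleContour]
    exact integral_boundary_rect_eq_zero_of_differentiableOn ψ ⟨x₀, y₀⟩ ⟨x₁, y₁⟩
      (hψ.mono (by simpa only [uIcc_of_le hx, uIcc_of_le hy] using hrect))
  sum_integral_sub_inv _ ht := sum_integral_rectangleContour_sub_inv hx hy ht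

end Rectangle

section Annulus

/-- The circle of radius `R` about `0`, with weight `c` times the derivative. -/
def circlePiece (R : ℝ) (c : ℂ) : ContourPiece where
  curve := ⟨circleMap 0 R, continuous_circleMap 0 R⟩
  weight := ⟨fun s => c * deriv (circleMap 0 R) s, by
    simp only [deriv_circleMap]; fun_prop⟩
  lo := 0
  hi := 2 * Real.pi
  lo_le_hi := Real.two_pi_pos.le

lemma circlePiece_integral (R : ℝ) (c : ℂ) (φ : ℂ → ℂ) :
    (circlePiece R c).integral φ = c * ∮ w in C(0, R), φ w := by
  simp only [ContourPiece.integral, circlePiece, ContinuousMap.coe_mk, circleIntegral, smul_eq_mul,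
    mul_assoc, intervalIntegral.integral_const_mul]

lemma circlePiece_trace_subset {R : ℝ} (hR : 0 ≤ R) (c : ℂ) :
    (circlePiece R c).trace ⊆ {z | ‖z‖ = R} := by
  rintro _ ⟨s, -, rfl⟩
  exact mem_sphere_zero_iff_norm.1 (circleMap_mem_sphere 0 hR s)

/-- The boundary of the annulus `r ≤ ‖z‖ ≤ R`: the outer circle run counterclockwise, the inner one
clockwise. -/
def annulusContour (r R : ℝ) : Fin 2 → ContourPiece :=
  ![circlePiece R 1, circlePiece r (-1)]

lemma sum_integral_annulusContour (r R : ℝ) (φ : ℂ → ℂ) :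
    ∑ k, (annulusContour r R k).integral φ = (∮ w in C(0, R), φ w) - ∮ w in C(0, r), φ w := by
  simp only [annulusContour, Fin.sum_univ_two, Matrix.cons_val, circlePiece_integral]
  ring

lemma circleIntegral_sub_inv_eq_zero {r : ℝ} (hr : 0 < r) {t : ℂ} (ht : r < ‖t‖) :
    ∮ w in C(0, r), (w - t)⁻¹ = 0 := by
  refine DiffContOnCl.circleIntegral_eq_zero hr.le (DifferentiableOn.diffContOnCl fun w hw => ?_)
  rw [closure_ball _ hr.ne', mem_closedBall_zero_iff] at hw
  refine (DifferentiableAt.inv (by fun_prop) (sub_ne_zero.2 ?_)).differentiableWithinAt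
  rintro rfl
  exact hw.not_gt ht

lemma isCauchyContour_annulusContour {r R : ℝ} (hr : 0 < r) (hrR : r ≤ R) {U : Set ℂ}
    (hU : IsOpen U) (hannulus : {z : ℂ | r ≤ ‖z‖ ∧ ‖z‖ ≤ R} ⊆ U) :
    IsCauchyContour (annulusContour r R) U {z | r < ‖z‖ ∧ ‖z‖ < R} where
  isOpen := hU
  subset _ ht := hannulus ⟨ht.1.le, ht.2.le⟩
  trace_subset k := by
    fin_cases k
    · exact (circlePiece_trace_subset (hr.le.trans hrR) 1).trans fun z hz =>
        hannulus ⟨hrR.trans_eq hz.symm, hz.le⟩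
    · exact (circlePiece_trace_subset hr.le (-1)).trans fun z hz =>
        hannulus ⟨hz.ge, hz.trans_le hrR⟩
  disjoint k := by
    rw [disjoint_left]
    intro z hz ht
    fin_cases k
    · exact ht.2.ne (circlePiece_trace_subset (hr.le.trans hrR) 1 hz)
    · exact ht.1.ne' (circlePiece_trace_subset hr.le (-1) hz)
  sum_integral_eq_zero ψ hψ := by
    rw [sum_integral_annulusContour, sub_eq_zero]
    refine circleIntegral_eq_of_differentiable_on_annulus_off_countable hr hrR countable_empty
      (hψ.continuousOn.mono fun z hz => hannulus ?_) fun z hz =>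
        hψ.differentiableAt (hU.mem_nhds (hannulus ?_))
    · simpa [and_comm] using hz
    · have hz' : ‖z‖ < R ∧ r < ‖z‖ := by simpa using hz
      exact ⟨hz'.2.le, hz'.1.le⟩
  sum_integral_sub_inv t ht := by
    rw [sum_integral_annulusContour, circleIntegral_sub_inv_eq_zero hr ht.1, sub_zero]
    exact circleIntegral.integral_sub_inv_of_mem_ball (mem_ball_zero_iff.2 ht.2)

end Annulus

/-! ### Additive splittings -/

section Splitting

variable {E : Type*} [NormedAddCommGroup E] [NormedSpace ℂ E]

/-- Bounded holomorphic functions on an open set `Ω`. -/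
def IsBoundedAnalyticOn (h : E → ℂ) (Ω : Set E) : Prop :=
  AnalyticOnNhd ℂ h Ω ∧ ∃ M, ∀ v ∈ Ω, ‖h v‖ ≤ M

namespace IsBoundedAnalyticOn

variable {h h₁ h₂ : E → ℂ} {Ω Ω' : Set E}

lemma mono (hh : IsBoundedAnalyticOn h Ω) (hΩ : Ω' ⊆ Ω) : IsBoundedAnalyticOn h Ω' :=
  ⟨hh.1.mono hΩ, hh.2.imp fun _ hM v hv => hM v (hΩ hv)⟩

lemma sub (hh₁ : IsBoundedAnalyticOn h₁ Ω) (hh₂ : IsBoundedAnalyticOn h₂ Ω) :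
    IsBoundedAnalyticOn (fun v => h₁ v - h₂ v) Ω := by
  obtain ⟨ha₁, M₁, hM₁⟩ := hh₁
  obtain ⟨ha₂, M₂, hM₂⟩ := hh₂
  exact ⟨fun v hv => (ha₁ v hv).sub (ha₂ v hv), M₁ + M₂, fun v hv =>
    (norm_sub_le _ _).trans (add_le_add (hM₁ v hv) (hM₂ v hv))⟩

lemma const_mul (hh : IsBoundedAnalyticOn h Ω) (c : ℂ) :
    IsBoundedAnalyticOn (fun v => c * h v) Ω := by
  obtain ⟨ha, M, hM⟩ := hh
  refine ⟨fun v hv => analyticAt_const.mul (ha v hv), ‖c‖ * M, fun v hv => ?_⟩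
  rw [norm_mul]
  exact mul_le_mul_of_nonneg_left (hM v hv) (norm_nonneg c)

lemma pow_mul {Q : E → ℂ} (hQ : IsBoundedAnalyticOn Q Ω) (n : ℕ) (hh : IsBoundedAnalyticOn h Ω) :
    IsBoundedAnalyticOn (fun v => Q v ^ n * h v) Ω := by
  obtain ⟨haQ, B, hB⟩ := hQ
  obtain ⟨ha, M, hM⟩ := hh
  refine ⟨fun v hv => ((haQ v hv).pow n).mul (ha v hv), B ^ n * M, fun v hv => ?_⟩
  have hB0 : 0 ≤ B := (norm_nonneg _).trans (hB v hv)
  rw [norm_mul, norm_pow]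
  gcongr
  exacts [hB v hv, hM v hv]

lemma sum {κ : Type*} {s : Finset κ} {h : κ → E → ℂ}
    (hh : ∀ k ∈ s, IsBoundedAnalyticOn (h k) Ω) :
    IsBoundedAnalyticOn (fun v => ∑ k ∈ s, h k v) Ω := by
  choose! ha M hM using hh
  exact ⟨fun v hv => Finset.analyticAt_fun_sum _ fun k hk => ha k hk v hv, ∑ k ∈ s, M k,
    fun v hv => norm_sum_le_of_le _ fun k hk => hM k hk v hv⟩

end IsBoundedAnalyticOn

/-- Every holomorphic function on `Ω` is, on `Ω₁ ∩ Ω₂`, a difference of bounded holomorphic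
functions on `Ω₁` and on `Ω₂`: the first Cousin problem for the two sets, with bounds. -/
def HasCousinSplitting (Ω Ω₁ Ω₂ : Set E) : Prop :=
  ∀ h, AnalyticOnNhd ℂ h Ω → ∃ h₁ h₂, IsBoundedAnalyticOn h₁ Ω₁ ∧ IsBoundedAnalyticOn h₂ Ω₂ ∧
    ∀ v ∈ Ω₁ ∩ Ω₂, h v = h₁ v - h₂ v

lemma HasCousinSplitting.mono {Ω Ω' Ω₁ Ω₁' Ω₂ Ω₂' : Set E} (h : HasCousinSplitting Ω Ω₁ Ω₂)
    (hΩ : Ω ⊆ Ω') (hΩ₁ : Ω₁' ⊆ Ω₁) (hΩ₂ : Ω₂' ⊆ Ω₂) : HasCousinSplitting Ω' Ω₁' Ω₂' := by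
  intro φ hφ
  obtain ⟨h₁, h₂, hh₁, hh₂, hφh⟩ := h φ (hφ.mono hΩ)
  exact ⟨h₁, h₂, hh₁.mono hΩ₁, hh₂.mono hΩ₂, fun v hv => hφh v ⟨hΩ₁ hv.1, hΩ₂ hv.2⟩⟩

end Splitting

lemma areSeparated_iff_exists_pos_le_dist {X : Type*} [PseudoMetricSpace X] {s t : Set X} :
    Metric.AreSeparated s t ↔ ∃ η > 0, ∀ x ∈ s, ∀ y ∈ t, η ≤ dist x y := by
  constructor
  · rintro ⟨r, hr, hst⟩
    refine ⟨(min r 1).toReal, ENNReal.toReal_pos (by simp [hr]) (by simp), fun x hx y hy => ?_⟩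
    rw [dist_edist]
    exact ENNReal.toReal_mono (edist_ne_top x y) ((min_le_left _ _).trans (hst x hx y hy))
  · rintro ⟨η, hη, hst⟩
    refine ⟨ENNReal.ofReal η, by simpa using hη, fun x hx y hy => ?_⟩
    rw [edist_dist]
    exact ENNReal.ofReal_le_ofReal (hst x hx y hy)

lemma analyticAt_apply {ι : Type*} [Fintype ι] (j : ι) (v : ι → ℂ) :
    AnalyticAt ℂ (fun w : ι → ℂ => w j) v :=
  (ContinuousLinearMap.proj (R := ℂ) (φ := fun _ : ι => ℂ) j).analyticAt v

section Cylinder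

variable {ι : Type*}

/-- The cylinder over `A` in the direction of the coordinate `i₀`, of radius `δ` in the other
coordinates. -/
def cylinder (i₀ : ι) (A : Set ℂ) (δ : ℝ) : Set (ι → ℂ) :=
  {v | v i₀ ∈ A ∧ ∀ j ≠ i₀, ‖v j‖ < δ}

variable {i₀ : ι} {A A' : Set ℂ} {δ δ' : ℝ}

lemma cylinder_mono (hA : A ⊆ A') (hδ : δ ≤ δ') : cylinder i₀ A δ ⊆ cylinder i₀ A' δ' :=
  fun _ hv => ⟨hA hv.1, fun j hj => (hv.2 j hj).trans_le hδ⟩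

lemma isOpen_cylinder [Finite ι] (hA : IsOpen A) : IsOpen (cylinder i₀ A δ) := by
  simp only [cylinder, ofPred_and, ofPred_forall]
  exact (hA.preimage (continuous_apply i₀)).inter <| isOpen_iInter_of_finite fun j =>
    isOpen_iInter_of_finite fun _ => isOpen_lt (by fun_prop) continuous_const

section CauchyTransform

variable [DecidableEq ι]

lemma update_mem_cylinder {v : ι → ℂ} (hv : v ∈ cylinder i₀ A δ) {w : ℂ} (hw : w ∈ A') :
    Function.update v i₀ w ∈ cylinder i₀ A' δ := by
  refine ⟨by rwa [Function.update_self], fun j hj => ?_⟩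
  rw [Function.update_of_ne hj]
  exact hv.2 j hj

lemma exists_bound_update_of_isCompact {T : Set ℂ} (hT : IsCompact T) {h : (ι → ℂ) → ℂ}
    (hh : ContinuousOn h (cylinder i₀ T δ)) (hδ : δ' < δ) (V : Set ℂ) :
    ∃ M, ∀ v ∈ cylinder i₀ V δ', ∀ w ∈ T, ‖h (Function.update v i₀ w)‖ ≤ M := by
  let K : Set (ι → ℂ) :=
    univ.pi (Function.update (fun _ => Metric.closedBall (0 : ℂ) δ') i₀ T)
  have hK : IsCompact K := isCompact_univ_pi fun j => by
    rcases eq_or_ne j i₀ with rfl | hj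
    · simpa using hT
    · simpa [hj] using isCompact_closedBall (0 : ℂ) δ'
  have hKcyl : K ⊆ cylinder i₀ T δ := fun v hv => by
    refine ⟨by simpa using hv i₀ trivial, fun j hj => lt_of_le_of_lt ?_ hδ⟩
    simpa [hj] using hv j trivial
  obtain ⟨M, hM⟩ := hK.exists_bound_of_continuousOn (hh.mono hKcyl)
  refine ⟨M, fun v hv w hw => hM _ fun j _ => ?_⟩
  rcases eq_or_ne j i₀ with rfl | hj
  · simpa using hw
  · simpa [hj] using (hv.2 j hj).le

variable [Fintype ι]

/-- The Cauchy transform of `h` along `γ` in the variable `i₀`. -/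
def cauchyTransform (i₀ : ι) (γ : ContourPiece) (h : (ι → ℂ) → ℂ) (v : ι → ℂ) : ℂ :=
  γ.integral fun w => (w - v i₀)⁻¹ * h (Function.update v i₀ w)

lemma analyticAt_update (i₀ : ι) (p : ℂ × (ι → ℂ)) :
    AnalyticAt ℂ (fun wv : ℂ × (ι → ℂ) => Function.update wv.2 i₀ wv.1) p := by
  refine analyticAt_pi_iff.2 fun j => ?_
  rcases eq_or_ne j i₀ with rfl | hj
  · simpa only [Function.update_self] using analyticAt_fst
  · simp only [Function.update_of_ne hj]
    exact (analyticAt_apply j p.2).fun_comp analyticAt_snd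

lemma analyticAt_cauchyTransform {γ : ContourPiece} {h : (ι → ℂ) → ℂ} {v : ι → ℂ}
    (hv : v i₀ ∉ γ.trace) (hh : ∀ w ∈ γ.trace, AnalyticAt ℂ h (Function.update v i₀ w)) :
    AnalyticAt ℂ (cauchyTransform i₀ γ h) v := by
  refine analyticAt_intervalIntegral γ.lo_le_hi γ.curve.continuous γ.weight
    (κ := fun wv : ℂ × (ι → ℂ) => (wv.1 - wv.2 i₀)⁻¹ * h (Function.update wv.2 i₀ wv.1))
    fun s hs => ?_
  have hw : γ.curve s ∈ γ.trace := mem_image_of_mem _ hs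
  have hne : γ.curve s - v i₀ ≠ 0 := sub_ne_zero.2 fun heq => hv (heq ▸ hw)
  have hsub : AnalyticAt ℂ (fun wv : ℂ × (ι → ℂ) => wv.1 - wv.2 i₀) (γ.curve s, v) :=
    analyticAt_fst.sub
      (AnalyticAt.fun_comp (g := fun u : ι → ℂ => u i₀) (analyticAt_apply i₀ v) analyticAt_snd)
  exact (hsub.inv hne).mul (AnalyticAt.fun_comp (hh _ hw) (analyticAt_update i₀ _))

lemma isBoundedAnalyticOn_cauchyTransform {γ : ContourPiece} {U V : Set ℂ} (hγU : γ.trace ⊆ U)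
    (hγV : Metric.AreSeparated γ.trace V) {h : (ι → ℂ) → ℂ}
    (hh : AnalyticOnNhd ℂ h (cylinder i₀ U δ)) (hδ : δ' < δ) :
    IsBoundedAnalyticOn (cauchyTransform i₀ γ h) (cylinder i₀ V δ') := by
  refine ⟨fun v hv => analyticAt_cauchyTransform
    (disjoint_right.1 hγV.disjoint hv.1) fun w hw => hh _ <|
      cylinder_mono hγU hδ.le (update_mem_cylinder hv hw), ?_⟩
  obtain ⟨M, hM⟩ := exists_bound_update_of_isCompact (i₀ := i₀) γ.isCompact_trace
    (hh.continuousOn.mono (cylinder_mono hγU le_rfl)) hδ V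
  obtain ⟨L, hL⟩ := γ.exists_norm_integral_le
  obtain ⟨η, hη, hsep⟩ := areSeparated_iff_exists_pos_le_dist.1 hγV
  refine ⟨L * (η⁻¹ * M), fun v hv => hL _ _ fun w hw => ?_⟩
  rw [norm_mul, norm_inv]
  gcongr
  · exact dist_eq_norm w (v i₀) ▸ hsep w hw _ hv.1
  · exact hM v hv w hw

end CauchyTransform

variable [Fintype ι]

theorem IsCauchyContour.hasCousinSplitting {κ : Type*} [Fintype κ] {Γ : κ → ContourPiece}
    {U W V₁ V₂ : Set ℂ} (hΓ : IsCauchyContour Γ U W) (hV : V₁ ∩ V₂ ⊆ W)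
    (hsep : ∀ k, Metric.AreSeparated (Γ k).trace V₁ ∨ Metric.AreSeparated (Γ k).trace V₂)
    (i₀ : ι) (hδ : δ' < δ) :
    HasCousinSplitting (cylinder i₀ U δ) (cylinder i₀ V₁ δ') (cylinder i₀ V₂ δ') := by
  classical
  intro h hh
  let far : Finset κ := {k | Metric.AreSeparated (Γ k).trace V₁}
  let T (k : κ) : (ι → ℂ) → ℂ := cauchyTransform i₀ (Γ k) h
  have hT₁ : ∀ k ∈ far, IsBoundedAnalyticOn (T k) (cylinder i₀ V₁ δ') := fun k hk =>
    isBoundedAnalyticOn_cauchyTransform (hΓ.trace_subset k) (Finset.mem_filter.1 hk).2 hh hδ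
  have hT₂ : ∀ k ∈ farᶜ, IsBoundedAnalyticOn (T k) (cylinder i₀ V₂ δ') := fun k hk =>
    isBoundedAnalyticOn_cauchyTransform (hΓ.trace_subset k)
      ((hsep k).resolve_left (by simpa [far] using hk)) hh hδ
  refine ⟨fun v => (2 * Real.pi * I)⁻¹ * ∑ k ∈ far, T k v,
    fun v => -(2 * Real.pi * I)⁻¹ * ∑ k ∈ farᶜ, T k v, (IsBoundedAnalyticOn.sum hT₁).const_mul _,
    (IsBoundedAnalyticOn.sum hT₂).const_mul _, fun v hv => ?_⟩
  have hslice : DifferentiableOn ℂ (fun w => h (Function.update v i₀ w)) U := fun w hw =>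
    ((hh _ (cylinder_mono subset_rfl hδ.le (update_mem_cylinder hv.1 hw))).differentiableAt.comp w
      (hasDerivAt_update v i₀ w).differentiableAt).differentiableWithinAt
  have hcauchy := hΓ.sum_integral_sub_inv_mul hslice (hV ⟨hv.1.1, hv.2.1⟩)
  simp only [Function.update_eq_self] at hcauchy
  beta_reduce
  rw [neg_mul, sub_neg_eq_add, ← mul_add, Finset.sum_add_sum_compl,
    eq_inv_mul_iff_mul_eq₀ two_pi_I_ne_zero]
  exact hcauchy.symm

lemma hasCousinSplitting_annulus (i₀ : ι) {a R₁ R₂ b : ℝ} (ha : 0 ≤ a) (hR₂ : a < R₂) (hR₁ : R₁ < b)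
    (hR : R₂ ≤ R₁) (hδ : δ' < δ) :
    HasCousinSplitting (cylinder i₀ {z | a < ‖z‖ ∧ ‖z‖ < b} δ)
      (cylinder i₀ (Metric.ball 0 R₁) δ') (cylinder i₀ {z | R₂ < ‖z‖} δ') := by
  have hopen : IsOpen {z : ℂ | a < ‖z‖ ∧ ‖z‖ < b} :=
    (isOpen_lt continuous_const continuous_norm).inter (isOpen_lt continuous_norm continuous_const)
  refine (isCauchyContour_annulusContour (r := (a + R₂) / 2) (R := (R₁ + b) / 2) (by linarith)
    (by linarith) hopen fun z hz => ⟨?_, ?_⟩).hasCousinSplitting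
      (fun z hz => ?_) (fun k => ?_) i₀ hδ
  · linarith [hz.1]
  · linarith [hz.2]
  · have hz₁ := mem_ball_zero_iff.1 hz.1
    have hz₂ : R₂ < ‖z‖ := hz.2
    constructor <;> linarith
  fin_cases k
  · refine Or.inl (areSeparated_iff_exists_pos_le_dist.2 ⟨(b - R₁) / 2, by linarith, ?_⟩)
    intro w hw z hz
    have hw' : ‖w‖ = (R₁ + b) / 2 := circlePiece_trace_subset (by linarith) _ hw
    have hz' := mem_ball_zero_iff.1 hz
    rw [dist_eq_norm]
    linarith [norm_sub_norm_le w z]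
  · refine Or.inr (areSeparated_iff_exists_pos_le_dist.2 ⟨(R₂ - a) / 2, by linarith, ?_⟩)
    intro w hw z hz
    have hw' : ‖w‖ = (a + R₂) / 2 := circlePiece_trace_subset (by linarith) _ hw
    have hz' : R₂ < ‖z‖ := hz
    rw [dist_eq_norm, norm_sub_rev]
    linarith [norm_sub_norm_le z w]

end Cylinder

/-! ### Gluing approximants -/

section Approximant

variable {E : Type*} [NormedAddCommGroup E] [NormedSpace ℂ E]

/-- `g` is a bounded holomorphic function on `Ω` that approximates `f` on `Ω ∩ S` up to order `n`
with respect to `Q`. -/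
structure IsApproximant (f Q : E → ℂ) (S : Set E) (n : ℕ) (Ω : Set E) (g : E → ℂ) : Prop where
  isBoundedAnalyticOn : IsBoundedAnalyticOn g Ω
  exists_norm_sub_le : ∃ C, ∀ v ∈ Ω ∩ S, ‖f v - g v‖ ≤ C * ‖Q v‖ ^ n

/-- `Q` is a bounded holomorphic function on `D`, nowhere locally zero, and the points where its
values have an argument in `(α, β)` are limits of points of `S`. -/
structure IsSectorialGauge (Q : E → ℂ) (α β : ℝ) (S D : Set E) : Prop where
  lt : α < β
  isBoundedAnalyticOn : IsBoundedAnalyticOn Q D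
  frequently_ne_zero : ∀ p ∈ D, ∃ᶠ z in 𝓝 p, Q z ≠ 0
  mem_closure : ∀ v ∈ D, Q v ∈ angularSector α β → v ∈ closure S

/-- `f` has approximants of every order on the open subset `Ω` of `D`. -/
structure IsApproximableOn (f Q : E → ℂ) (S D Ω : Set E) : Prop where
  isOpen : IsOpen Ω
  subset : Ω ⊆ D
  exists_isApproximant : ∀ n, ∃ g, IsApproximant f Q S n Ω g

variable {f Q g₁ g₂ : E → ℂ} {S D Ω Ω₁ Ω₂ Ω₁' Ω₂' : Set E} {α β : ℝ} {n : ℕ}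

lemma IsApproximant.mono {g : E → ℂ} {Ω' : Set E} (hg : IsApproximant f Q S n Ω g) (hΩ : Ω' ⊆ Ω) :
    IsApproximant f Q S n Ω' g :=
  ⟨hg.isBoundedAnalyticOn.mono hΩ,
    hg.exists_norm_sub_le.imp fun _ hC v hv => hC v ⟨hΩ hv.1, hv.2⟩⟩

lemma IsApproximableOn.mono {Ω' : Set E} (h : IsApproximableOn f Q S D Ω) (hΩ' : IsOpen Ω')
    (hΩ : Ω' ⊆ Ω) : IsApproximableOn f Q S D Ω' :=
  ⟨hΩ', hΩ.trans h.subset, fun n => (h.exists_isApproximant n).imp fun _ hg => hg.mono hΩ⟩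

lemma IsApproximant.sub_pow_mul (hg : IsApproximant f Q S n Ω g₁) (hQ : IsBoundedAnalyticOn Q Ω)
    {h : E → ℂ} (hh : IsBoundedAnalyticOn h Ω) :
    IsApproximant f Q S n Ω fun v => g₁ v - Q v ^ n * h v := by
  refine ⟨hg.isBoundedAnalyticOn.sub (hQ.pow_mul n hh), ?_⟩
  obtain ⟨C, hC⟩ := hg.exists_norm_sub_le
  obtain ⟨M, hM⟩ := hh.2
  refine ⟨C + M, fun v hv => ?_⟩
  calc ‖f v - (g₁ v - Q v ^ n * h v)‖ = ‖(f v - g₁ v) + Q v ^ n * h v‖ := by ring_nf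
    _ ≤ ‖f v - g₁ v‖ + ‖Q v ^ n * h v‖ := norm_add_le _ _
    _ ≤ C * ‖Q v‖ ^ n + ‖Q v‖ ^ n * M := by
      rw [norm_mul, norm_pow]
      gcongr
      exacts [hC v hv, hM v hv.1]
    _ = (C + M) * ‖Q v‖ ^ n := by ring

lemma IsApproximant.union (hΩ₁ : IsOpen Ω₁) (hΩ₂ : IsOpen Ω₂) (hg₁ : IsApproximant f Q S n Ω₁ g₁)
    (hg₂ : IsApproximant f Q S n Ω₂ g₂) (heq : EqOn g₁ g₂ (Ω₁ ∩ Ω₂)) :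
    ∃ g, IsApproximant f Q S n (Ω₁ ∪ Ω₂) g := by
  classical
  have hpiece₁ : EqOn (Ω₁.piecewise g₁ g₂) g₁ Ω₁ := piecewise_eqOn Ω₁ g₁ g₂
  have hpiece₂ : EqOn (Ω₁.piecewise g₁ g₂) g₂ Ω₂ := fun v hv => by
    by_cases hv₁ : v ∈ Ω₁
    · rw [hpiece₁ hv₁, heq ⟨hv₁, hv⟩]
    · exact piecewise_eq_of_notMem _ _ _ hv₁
  obtain ⟨⟨ha₁, M₁, hM₁⟩, C₁, hC₁⟩ := hg₁
  obtain ⟨⟨ha₂, M₂, hM₂⟩, C₂, hC₂⟩ := hg₂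
  refine ⟨Ω₁.piecewise g₁ g₂, ⟨?_, max M₁ M₂, ?_⟩, max C₁ C₂, ?_⟩
  · rintro v (hv | hv)
    · exact (ha₁ v hv).congr (hpiece₁.symm.eventuallyEq_of_mem (hΩ₁.mem_nhds hv))
    · exact (ha₂ v hv).congr (hpiece₂.symm.eventuallyEq_of_mem (hΩ₂.mem_nhds hv))
  · rintro v (hv | hv)
    · rw [hpiece₁ hv]; exact (hM₁ v hv).trans (le_max_left _ _)
    · rw [hpiece₂ hv]; exact (hM₂ v hv).trans (le_max_right _ _)
  · rintro v ⟨hv | hv, hvS⟩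
    · rw [hpiece₁ hv]
      exact (hC₁ v ⟨hv, hvS⟩).trans (by gcongr; exact le_max_left _ _)
    · rw [hpiece₂ hv]
      exact (hC₂ v ⟨hv, hvS⟩).trans (by gcongr; exact le_max_right _ _)

lemma IsSectorialGauge.exists_sub_eq_pow_mul (hQ : IsSectorialGauge Q α β S D) (hΩ : IsOpen Ω)
    (hΩD : Ω ⊆ D) (hg₁ : IsApproximant f Q S n Ω g₁) (hg₂ : IsApproximant f Q S n Ω g₂) :
    ∃ h, AnalyticOnNhd ℂ h Ω ∧ ∀ v ∈ Ω, g₁ v - g₂ v = Q v ^ n * h v := by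
  obtain ⟨⟨ha₁, -⟩, C₁, hC₁⟩ := hg₁
  obtain ⟨⟨ha₂, -⟩, C₂, hC₂⟩ := hg₂
  have hQa : AnalyticOnNhd ℂ Q Ω := hQ.isBoundedAnalyticOn.1.mono hΩD
  have hS (v) (hv : v ∈ Ω ∩ S) : ‖g₁ v - g₂ v‖ ≤ (C₁ + C₂) * ‖Q v‖ ^ n := calc
    ‖g₁ v - g₂ v‖ ≤ ‖f v - g₁ v‖ + ‖f v - g₂ v‖ := by
      rw [norm_sub_rev (f v) (g₁ v)]
      exact norm_sub_le_norm_sub_add_norm_sub _ _ _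
    _ ≤ (C₁ + C₂) * ‖Q v‖ ^ n := by
      rw [add_mul]
      exact add_le_add (hC₁ v hv) (hC₂ v hv)
  refine exists_eq_pow_mul_of_norm_le_on_angularSector hΩ hQa
    (fun p hp => hQ.frequently_ne_zero p (hΩD hp)) (fun v hv => (ha₁ v hv).sub (ha₂ v hv))
    hQ.lt (C := C₁ + C₂) fun v hv hvQ => ?_
  refine le_of_tendsto_of_tendsto_of_frequently
    ((ha₁ v hv).continuousAt.sub (ha₂ v hv).continuousAt).norm
    (continuousAt_const.mul ((hQa v hv).continuousAt.norm.pow n)) ?_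
  exact ((mem_closure_iff_frequently.1 (hQ.mem_closure v (hΩD hv) hvQ)).and_eventually
    (hΩ.mem_nhds hv)).mono fun w hw => hS w ⟨hw.2, hw.1⟩

theorem IsApproximableOn.union_of_hasCousinSplitting (hQ : IsSectorialGauge Q α β S D)
    (h₁ : IsApproximableOn f Q S D Ω₁) (h₂ : IsApproximableOn f Q S D Ω₂)
    (hΩ₁' : IsOpen Ω₁') (hΩ₂' : IsOpen Ω₂') (hΩ₁ : Ω₁' ⊆ Ω₁) (hΩ₂ : Ω₂' ⊆ Ω₂)
    (hsplit : HasCousinSplitting (Ω₁ ∩ Ω₂) Ω₁' Ω₂') :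
    IsApproximableOn f Q S D (Ω₁' ∪ Ω₂') := by
  refine ⟨hΩ₁'.union hΩ₂', union_subset (hΩ₁.trans h₁.subset) (hΩ₂.trans h₂.subset), fun n => ?_⟩
  obtain ⟨g₁, hg₁⟩ := h₁.exists_isApproximant n
  obtain ⟨g₂, hg₂⟩ := h₂.exists_isApproximant n
  obtain ⟨h, hh, hgh⟩ := hQ.exists_sub_eq_pow_mul (h₁.isOpen.inter h₂.isOpen)
    (inter_subset_left.trans h₁.subset) (hg₁.mono inter_subset_left) (hg₂.mono inter_subset_right)
  obtain ⟨k₁, k₂, hk₁, hk₂, hhk⟩ := hsplit h hh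
  have hQ₁ := hQ.isBoundedAnalyticOn.mono (hΩ₁.trans h₁.subset)
  have hQ₂ := hQ.isBoundedAnalyticOn.mono (hΩ₂.trans h₂.subset)
  refine ((hg₁.mono hΩ₁).sub_pow_mul hQ₁ hk₁).union hΩ₁' hΩ₂' ((hg₂.mono hΩ₂).sub_pow_mul hQ₂ hk₂)
    fun v hv => ?_
  linear_combination hgh v ⟨hΩ₁ hv.1, hΩ₂ hv.2⟩ + Q v ^ n * hhk v hv

end Approximant

section Rectangles

/-- The open rectangle that extends `[x₀, x₁] × [y₀, y₁]` by `δ` on each side. -/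
def thickRectangle (x₀ x₁ y₀ y₁ δ : ℝ) : Set ℂ :=
  Ioo (x₀ - δ) (x₁ + δ) ×ℂ Ioo (y₀ - δ) (y₁ + δ)

lemma isOpen_thickRectangle (x₀ x₁ y₀ y₁ δ : ℝ) : IsOpen (thickRectangle x₀ x₁ y₀ y₁ δ) :=
  isOpen_Ioo.reProdIm isOpen_Ioo

lemma thickRectangle_mono {x₀ x₁ y₀ y₁ δ x₀' x₁' y₀' y₁' δ' : ℝ} (hx₀ : x₀' - δ' ≤ x₀ - δ)
    (hx₁ : x₁ + δ ≤ x₁' + δ') (hy₀ : y₀' - δ' ≤ y₀ - δ) (hy₁ : y₁ + δ ≤ y₁' + δ') :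
    thickRectangle x₀ x₁ y₀ y₁ δ ⊆ thickRectangle x₀' x₁' y₀' y₁' δ' := fun _ hz =>
  ⟨Ioo_subset_Ioo hx₀ hx₁ hz.1, Ioo_subset_Ioo hy₀ hy₁ hz.2⟩

lemma areSeparated_rectangleContour {x₀ x₁ y₀ y₁ : ℝ} (hx : x₀ ≤ x₁) (hy : y₀ ≤ y₁) {V : Set ℂ}
    {η : ℝ} (hη : 0 < η) (k : Fin 4)
    (hV : ∀ z ∈ V, η ≤ ![z.im - y₀, x₁ - z.re, y₁ - z.im, z.re - x₀] k) :
    Metric.AreSeparated (rectangleContour hx hy k).trace V := by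
  refine areSeparated_iff_exists_pos_le_dist.2 ⟨η, hη, ?_⟩
  rintro _ ⟨s, -, rfl⟩ z hz
  refine (hV z hz).trans ?_
  rw [dist_eq_norm]
  fin_cases k
  · rw [norm_sub_rev]
    simpa [rectangleContour, linePiece] using im_le_norm (z - (y₀ * I + s * 1))
  · simpa [rectangleContour, linePiece] using re_le_norm (x₁ + s * I - z)
  · simpa [rectangleContour, linePiece] using im_le_norm (y₁ * I + s * 1 - z)
  · rw [norm_sub_rev]
    simpa [rectangleContour, linePiece] using re_le_norm (z - (x₀ + s * I))

variable {ι : Type*} [Fintype ι] {i₀ : ι} {f Q : (ι → ℂ) → ℂ} {S D : Set (ι → ℂ)} {α β : ℝ}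

/-- `f` has approximants of every order on a cylinder over a neighborhood of the rectangle
`[x₀, x₁] × [y₀, y₁]`. -/
def IsApproximableNearRectangle (i₀ : ι) (f Q : (ι → ℂ) → ℂ) (S D : Set (ι → ℂ))
    (x₀ x₁ y₀ y₁ : ℝ) : Prop :=
  ∃ δ > 0, IsApproximableOn f Q S D (cylinder i₀ (thickRectangle x₀ x₁ y₀ y₁ δ) δ)

lemma IsApproximableNearRectangle.exists_common_radius {x₀ x₁ y₀ y₁ x₀' x₁' y₀' y₁' : ℝ}
    (h : IsApproximableNearRectangle i₀ f Q S D x₀ x₁ y₀ y₁)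
    (h' : IsApproximableNearRectangle i₀ f Q S D x₀' x₁' y₀' y₁') :
    ∃ δ > 0, IsApproximableOn f Q S D (cylinder i₀ (thickRectangle x₀ x₁ y₀ y₁ δ) δ) ∧
      IsApproximableOn f Q S D (cylinder i₀ (thickRectangle x₀' x₁' y₀' y₁' δ) δ) := by
  obtain ⟨δ, hδ, hδf⟩ := h
  obtain ⟨δ', hδ', hδf'⟩ := h'
  have shrink {a b c d ε : ℝ} (hε : min δ δ' ≤ ε) :
      cylinder i₀ (thickRectangle a b c d (min δ δ')) (min δ δ') ⊆
        cylinder i₀ (thickRectangle a b c d ε) ε :=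
    cylinder_mono (thickRectangle_mono (by linarith) (by linarith) (by linarith) (by linarith)) hε
  exact ⟨min δ δ', lt_min hδ hδ',
    hδf.mono (isOpen_cylinder (isOpen_thickRectangle _ _ _ _ _)) (shrink (min_le_left _ _)),
    hδf'.mono (isOpen_cylinder (isOpen_thickRectangle _ _ _ _ _)) (shrink (min_le_right _ _))⟩

lemma IsApproximableNearRectangle.of_ball {x y δ : ℝ} (hδ : 0 < δ)
    (h : IsApproximableOn f Q S D (cylinder i₀ (Metric.ball (⟨x, y⟩ : ℂ) δ) δ)) {u v : ℝ}
    (hu : y - δ / 4 < u) (hv : v < y + δ / 4) :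
    IsApproximableNearRectangle i₀ f Q S D x x u v := by
  refine ⟨δ / 4, by positivity, h.mono (isOpen_cylinder (isOpen_thickRectangle _ _ _ _ _))
    (cylinder_mono ?_ (by linarith))⟩
  rintro z ⟨⟨_, _⟩, _, _⟩
  rw [mem_ball_iff_norm]
  calc ‖z - ⟨x, y⟩‖ ≤ |z.re - x| + |z.im - y| := norm_le_abs_re_add_abs_im _
    _ < δ / 4 + δ / 2 := by
      gcongr <;> rw [abs_lt] <;> constructor <;> linarith
    _ < δ := by linarith

lemma IsApproximableOn.cylinder_union (hQ : IsSectorialGauge Q α β S D) {κ : Type*} [Fintype κ]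
    {Γ : κ → ContourPiece} {W A₁ A₂ A₁' A₂' : Set ℂ} (hΓ : IsCauchyContour Γ (A₁ ∩ A₂) W)
    (hA₁' : IsOpen A₁') (hA₂' : IsOpen A₂') (hA₁ : A₁' ⊆ A₁) (hA₂ : A₂' ⊆ A₂)
    (hW : A₁' ∩ A₂' ⊆ W)
    (hsep : ∀ k, Metric.AreSeparated (Γ k).trace A₁' ∨ Metric.AreSeparated (Γ k).trace A₂')
    {δ δ' : ℝ} (hδ : δ' < δ) (h₁ : IsApproximableOn f Q S D (cylinder i₀ A₁ δ))
    (h₂ : IsApproximableOn f Q S D (cylinder i₀ A₂ δ)) :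
    IsApproximableOn f Q S D (cylinder i₀ (A₁' ∪ A₂') δ') := by
  refine (h₁.union_of_hasCousinSplitting hQ h₂ (isOpen_cylinder hA₁') (isOpen_cylinder hA₂')
    (cylinder_mono hA₁ hδ.le) (cylinder_mono hA₂ hδ.le) ?_).mono
    (isOpen_cylinder (hA₁'.union hA₂')) fun v hv =>
      hv.1.imp (fun h => ⟨h, hv.2⟩) fun h => ⟨h, hv.2⟩
  exact (hΓ.hasCousinSplitting hW hsep i₀ hδ).mono
    (fun v hv => ⟨⟨hv.1.1, hv.2⟩, hv.1.2, hv.2⟩) subset_rfl subset_rfl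

namespace IsApproximableNearRectangle

variable {x₀ x₁ x₂ y₀ y₁ y₂ x₀' x₁' y₀' y₁' : ℝ}

-- Each side of the contour around the intersection is a translate of part of a side of one of the
-- two rectangles, which is why it stays away from that rectangle.
lemma union (hQ : IsSectorialGauge Q α β S D) (hx : max x₀ x₀' ≤ min x₁ x₁')
    (hy : max y₀ y₀' ≤ min y₁ y₁') (h : IsApproximableNearRectangle i₀ f Q S D x₀ x₁ y₀ y₁)
    (h' : IsApproximableNearRectangle i₀ f Q S D x₀' x₁' y₀' y₁') :
    ∃ δ > 0, IsApproximableOn f Q S D (cylinder i₀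
      (thickRectangle x₀ x₁ y₀ y₁ δ ∪ thickRectangle x₀' x₁' y₀' y₁' δ) δ) := by
  obtain ⟨δ, hδ, hδf, hδf'⟩ := exists_common_radius h h'
  have hη : 0 < δ / 4 := by positivity
  have hxδ : max x₀ x₀' - δ / 2 ≤ min x₁ x₁' + δ / 2 := by linarith
  have hyδ : max y₀ y₀' - δ / 2 ≤ min y₁ y₁' + δ / 2 := by linarith
  have hcontour := isCauchyContour_rectangleContour hxδ hyδ
    ((isOpen_thickRectangle x₀ x₁ y₀ y₁ δ).inter (isOpen_thickRectangle x₀' x₁' y₀' y₁' δ)) <| by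
      rintro z ⟨⟨_, _⟩, _, _⟩
      refine ⟨⟨⟨?_, ?_⟩, ?_, ?_⟩, ⟨?_, ?_⟩, ?_, ?_⟩ <;> grind
  refine ⟨δ / 4, hη, hδf.cylinder_union hQ hcontour (isOpen_thickRectangle _ _ _ _ _)
    (isOpen_thickRectangle _ _ _ _ _) (thickRectangle_mono ?_ ?_ ?_ ?_)
    (thickRectangle_mono ?_ ?_ ?_ ?_) ?_ (fun k => ?_) (by linarith) hδf'⟩
  any_goals linarith
  · rintro z ⟨⟨⟨_, _⟩, _, _⟩, ⟨_, _⟩, _, _⟩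
    refine ⟨⟨?_, ?_⟩, ?_, ?_⟩ <;> grind
  · suffices (∀ z ∈ thickRectangle x₀ x₁ y₀ y₁ (δ / 4), δ / 4 ≤ _) ∨
        ∀ z ∈ thickRectangle x₀' x₁' y₀' y₁' (δ / 4), δ / 4 ≤ _ from
      this.imp (areSeparated_rectangleContour _ _ hη k) (areSeparated_rectangleContour _ _ hη k)
    fin_cases k
    · refine (max_choice y₀ y₀').imp ?_ ?_ <;> rintro h z ⟨-, _, _⟩
      all_goals change δ / 4 ≤ z.im - (max y₀ y₀' - δ / 2); linarith
    · refine (min_choice x₁ x₁').imp ?_ ?_ <;> rintro h z ⟨⟨_, _⟩, -⟩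
      all_goals change δ / 4 ≤ min x₁ x₁' + δ / 2 - z.re; linarith
    · refine (min_choice y₁ y₁').imp ?_ ?_ <;> rintro h z ⟨-, _, _⟩
      all_goals change δ / 4 ≤ min y₁ y₁' + δ / 2 - z.im; linarith
    · refine (max_choice x₀ x₀').imp ?_ ?_ <;> rintro h z ⟨⟨_, _⟩, -⟩
      all_goals change δ / 4 ≤ z.re - (max x₀ x₀' - δ / 2); linarith

lemma trans_re (hQ : IsSectorialGauge Q α β S D) (hx₀₁ : x₀ ≤ x₁) (hx₁₂ : x₁ ≤ x₂) (hy : y₀ ≤ y₁)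
    (h₁ : IsApproximableNearRectangle i₀ f Q S D x₀ x₁ y₀ y₁)
    (h₂ : IsApproximableNearRectangle i₀ f Q S D x₁ x₂ y₀ y₁) :
    IsApproximableNearRectangle i₀ f Q S D x₀ x₂ y₀ y₁ := by
  obtain ⟨δ, hδ, h⟩ := h₁.union hQ (by simp [*]) (by simp [*]) h₂
  refine ⟨δ, hδ, h.mono (isOpen_cylinder (isOpen_thickRectangle _ _ _ _ _))
    (cylinder_mono ?_ le_rfl)⟩
  rintro z ⟨⟨_, _⟩, hz⟩
  rcases le_total z.re x₁ with _ | _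
  · exact Or.inl ⟨⟨by linarith, by linarith⟩, hz⟩
  · exact Or.inr ⟨⟨by linarith, by linarith⟩, hz⟩

lemma trans_im (hQ : IsSectorialGauge Q α β S D) (hx : x₀ ≤ x₁) (hy₀₁ : y₀ ≤ y₁) (hy₁₂ : y₁ ≤ y₂)
    (h₁ : IsApproximableNearRectangle i₀ f Q S D x₀ x₁ y₀ y₁)
    (h₂ : IsApproximableNearRectangle i₀ f Q S D x₀ x₁ y₁ y₂) :
    IsApproximableNearRectangle i₀ f Q S D x₀ x₁ y₀ y₂ := by
  obtain ⟨δ, hδ, h⟩ := h₁.union hQ (by simp [*]) (by simp [*]) h₂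
  refine ⟨δ, hδ, h.mono (isOpen_cylinder (isOpen_thickRectangle _ _ _ _ _))
    (cylinder_mono ?_ le_rfl)⟩
  rintro z ⟨hz, _, _⟩
  rcases le_total z.im y₁ with _ | _
  · exact Or.inl ⟨hz, by linarith, by linarith⟩
  · exact Or.inr ⟨hz, by linarith, by linarith⟩

lemma of_local (hQ : IsSectorialGauge Q α β S D)
    (h : ∀ ξ : ℂ, ∃ δ > 0, IsApproximableOn f Q S D (cylinder i₀ (Metric.ball ξ δ) δ))
    (hx : x₀ ≤ x₁) (hy : y₀ ≤ y₁) : IsApproximableNearRectangle i₀ f Q S D x₀ x₁ y₀ y₁ := by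
  refine interval_induction (p := fun a b => IsApproximableNearRectangle i₀ f Q S D a b y₀ y₁) hx
    (fun a b c hab hbc h₁ h₂ => h₁.trans_re hQ hab hbc hy h₂) fun x _ => ?_
  have hvertical : IsApproximableNearRectangle i₀ f Q S D x x y₀ y₁ :=
    interval_induction (p := fun a b => IsApproximableNearRectangle i₀ f Q S D x x a b) hy
      (fun a b c hab hbc h₁ h₂ => h₁.trans_im hQ le_rfl hab hbc h₂) fun y _ => by
        obtain ⟨δ, hδ, hδf⟩ := h ⟨x, y⟩
        exact ⟨δ / 4, by positivity, fun u v hu _ hv => of_ball hδ hδf hu hv⟩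
  obtain ⟨δ, hδ, hδf⟩ := hvertical
  refine ⟨δ / 2, by positivity, fun u v hu _ hv => ⟨δ / 2, by positivity,
    hδf.mono (isOpen_cylinder (isOpen_thickRectangle _ _ _ _ _)) (cylinder_mono
      (thickRectangle_mono ?_ ?_ ?_ ?_) ?_)⟩⟩ <;> linarith

end IsApproximableNearRectangle

theorem exists_isApproximableOn_cylinder_ball (hQ : IsSectorialGauge Q α β S D)
    (h : ∀ ξ : ℂ, ∃ δ > 0, IsApproximableOn f Q S D (cylinder i₀ (Metric.ball ξ δ) δ))
    {R : ℝ} (hR : 0 ≤ R) :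
    ∃ δ > 0, IsApproximableOn f Q S D (cylinder i₀ (Metric.ball 0 R) δ) := by
  obtain ⟨δ, hδ, hδf⟩ := IsApproximableNearRectangle.of_local hQ h (neg_le_self hR)
    (neg_le_self hR)
  refine ⟨δ, hδ, hδf.mono (isOpen_cylinder Metric.isOpen_ball)
    (cylinder_mono (fun z hz => ?_) le_rfl)⟩
  have hz' : ‖z‖ < R := mem_ball_zero_iff.1 hz
  have hre := abs_le.1 (abs_re_le_norm z)
  have him := abs_le.1 (abs_im_le_norm z)
  refine ⟨⟨?_, ?_⟩, ?_, ?_⟩ <;> linarith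

end Rectangles

/-! ### Pulling back and extending approximants -/

section Pullback

variable {E E' : Type*} [NormedAddCommGroup E] [NormedSpace ℂ E] [NormedAddCommGroup E']
  [NormedSpace ℂ E'] {f Q : E → ℂ} {S Ω : Set E} {n : ℕ}

lemma IsApproximant.comp {f' Q' g : E' → ℂ} {S' Ω' : Set E'} {τ : E → E'}
    (hg : IsApproximant f' Q' S' n Ω' g) (hτ : AnalyticOnNhd ℂ τ Ω) (hΩ : MapsTo τ Ω Ω')
    (hfτ : EqOn (f' ∘ τ) f Ω) (hQτ : EqOn (Q' ∘ τ) Q Ω) (hf : ∀ v ∈ Ω ∩ S, ContinuousAt f v)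
    (hQ : ∀ v ∈ Ω ∩ S, ContinuousAt Q v) (hS : Ω ∩ S ⊆ closure (Ω ∩ τ ⁻¹' S')) :
    IsApproximant f Q S n Ω (g ∘ τ) := by
  obtain ⟨⟨ha, M, hM⟩, C, hC⟩ := hg
  have hgτ : AnalyticOnNhd ℂ (g ∘ τ) Ω := ha.comp hτ hΩ
  have hle (w) (hw : w ∈ Ω ∩ τ ⁻¹' S') : ‖f w - g (τ w)‖ ≤ C * ‖Q w‖ ^ n := by
    rw [← hfτ hw.1, ← hQτ hw.1]
    exact hC _ ⟨hΩ hw.1, hw.2⟩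
  refine ⟨⟨hgτ, M, fun v hv => hM _ (hΩ hv)⟩, C, fun v hv => ?_⟩
  exact le_of_tendsto_of_tendsto_of_frequently
    ((hf v hv).sub (hgτ v hv.1).continuousAt).norm
    (continuousAt_const.mul ((hQ v hv).norm.pow n))
    ((mem_closure_iff_frequently.1 (hS hv)).mono hle)

lemma IsApproximant.exists_extension {g q : E → ℂ} (hΩ : IsOpen Ω)
    (hq : AnalyticOnNhd ℂ q Ω) (hne : ∀ p ∈ Ω, ∃ᶠ z in 𝓝 p, q z ≠ 0)
    (hS : ∀ v ∈ Ω ∩ S, q v ≠ 0)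
    (hg : IsApproximant f Q S n (Ω ∩ {z | q z ≠ 0}) g) : ∃ g', IsApproximant f Q S n Ω g' := by
  obtain ⟨⟨ha, M, hM⟩, C, hC⟩ := hg
  obtain ⟨Φ, hΦ, hΦg⟩ := exists_analyticOnNhd_of_bounded hΩ hq hne ha hM
  refine ⟨Φ, ⟨hΦ, M, fun v hv => ?_⟩, C, fun v hv => ?_⟩
  · refine le_of_tendsto_of_frequently (hΦ v hv).continuousAt.norm
      (((hne v hv).and_eventually (hΩ.mem_nhds hv)).mono fun w hw => ?_)
    rw [hΦg ⟨hw.2, hw.1⟩]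
    exact hM w ⟨hw.2, hw.1⟩
  · have hv' : v ∈ Ω ∩ {z | q z ≠ 0} := ⟨hv.1, hS v hv⟩
    rw [hΦg hv']
    exact hC v ⟨hv', hv.2⟩

end Pullback

/-! ### Polydisks and sectors -/

section Polydisk

variable {d : ℕ} {P f : (Fin d → ℂ) → ℂ} {α β r ρ : ℝ}

lemma polydisk_eq_ball (hr : 0 < r) : polydisk d r = Metric.ball 0 r := by
  ext x
  rw [mem_ball_zero_iff, pi_norm_lt_iff hr]
  rfl

lemma isOpen_polydisk (d : ℕ) (r : ℝ) : IsOpen (polydisk d r) := by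
  simp only [polydisk, ofPred_forall]
  exact isOpen_iInter_of_finite fun j => isOpen_lt (by fun_prop) continuous_const

lemma polydisk_mono {r r' : ℝ} (h : r ≤ r') : polydisk d r ⊆ polydisk d r' :=
  fun _ hx j => (hx j).trans_le h

lemma mem_PSector_iff {x : Fin d → ℂ} :
    x ∈ PSector d P α β r ↔ x ∈ polydisk d r ∧ (∀ j, x j ≠ 0) ∧ P x ∈ angularSector α β := by
  simp only [PSector, polydisk, angularSector, mem_ofPred_eq, forall_and, norm_pos_iff]
  tauto

lemma PSector_subset_polydisk : PSector d P α β r ⊆ polydisk d r := fun _ hx =>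
  (mem_PSector_iff.1 hx).1

lemma eventually_mem_PSector (hP : ContinuousOn P (polydisk d r)) {x : Fin d → ℂ}
    (hx : x ∈ polydisk d r) (hPx : P x ∈ angularSector α β) :
    ∀ᶠ y in 𝓝 x, (∀ j, y j ≠ 0) → y ∈ PSector d P α β r := by
  have hdisk := (isOpen_polydisk d r).mem_nhds hx
  filter_upwards [hdisk, (hP.continuousAt hdisk).eventually_mem ((isOpen_angularSector α β).mem_nhds
    hPx)] with y hy hPy hne using mem_PSector_iff.2 ⟨hy, hne, hPy⟩

lemma isOpen_PSector (hP : ContinuousOn P (polydisk d r)) : IsOpen (PSector d P α β r) := by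
  refine isOpen_iff_mem_nhds.2 fun x hx => ?_
  obtain ⟨hdisk, hne, hPx⟩ := mem_PSector_iff.1 hx
  filter_upwards [eventually_mem_PSector hP hdisk hPx, eventually_all.2 fun j =>
    (continuous_apply j).continuousAt.eventually_ne (hne j)] with y hy hne using hy hne

lemma frequently_forall_ne {ι : Type*} [Finite ι] (c v : ι → ℂ) : ∃ᶠ w in 𝓝 v, ∀ j, w j ≠ c j := by
  have hdense : Dense (univ.pi fun j => {c j}ᶜ : Set (ι → ℂ)) :=
    dense_pi univ fun j _ => dense_compl_singleton (c j)
  exact (mem_closure_iff_frequently.1 (hdense v)).mono fun w hw j => hw j trivial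

lemma exists_polydisk_subset_preimage {b : (Fin d → ℂ) → Fin d → ℂ} (hb : ContinuousAt b 0)
    (hb0 : b 0 = 0) (hr : 0 < r) (hρ : 0 < ρ) :
    ∃ r' > 0, r' ≤ r ∧ MapsTo b (polydisk d r') (polydisk d ρ) := by
  have hmem : b ⁻¹' polydisk d ρ ∈ 𝓝 0 := hb.preimage_mem_nhds
    ((isOpen_polydisk d ρ).mem_nhds (by simpa [hb0, polydisk] using fun _ => hρ))
  obtain ⟨ε, hε, hball⟩ := Metric.mem_nhds_iff.1 hmem
  refine ⟨min ε r, lt_min hε hr, min_le_right _ _, fun v hv => hball ?_⟩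
  rw [← polydisk_eq_ball hε]
  exact polydisk_mono (min_le_left _ _) hv

lemma isBoundedAnalyticOn_polydisk (hP : AnalyticOnNhd ℂ P (polydisk d ρ)) (hr : r < ρ) :
    IsBoundedAnalyticOn P (polydisk d r) := by
  refine ⟨hP.mono (polydisk_mono hr.le), ?_⟩
  have hcompact : IsCompact (univ.pi fun _ : Fin d => Metric.closedBall (0 : ℂ) r) :=
    isCompact_univ_pi fun _ => isCompact_closedBall _ _
  obtain ⟨M, hM⟩ := hcompact.exists_bound_of_continuousOn (hP.continuousOn.mono fun v hv j =>
    (mem_closedBall_zero_iff.1 (hv j trivial)).trans_lt hr)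
  exact ⟨M, fun v hv => hM v fun j _ => mem_closedBall_zero_iff.2 (hv j).le⟩

end Polydisk

/-! ### The blow-up and its charts -/

section Charts

variable {d : ℕ}

/-- The change of charts from `b_0` to `b_ξ`. -/
def recenter (ξ : ℂ) (v : Fin (d + 2) → ℂ) : Fin (d + 2) → ℂ :=
  Function.update v 0 (v 0 - ξ)

/-- The change of charts from `b_0` to `b_∞`, defined for `v 0 ≠ 0`. -/
def toInfChart (v : Fin (d + 2) → ℂ) : Fin (d + 2) → ℂ :=
  fun i => if i = 0 then (v 0)⁻¹ else if i = 1 then v 0 * v 1 else v i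

/-- The inverse of the chart `b_0`, defined for `x 0 ≠ 0`. -/
def blowUpSection (x : Fin (d + 2) → ℂ) : Fin (d + 2) → ℂ :=
  fun i => if i = 0 then x 1 / x 0 else if i = 1 then x 0 else x i

lemma blowUpC_recenter (ξ : ℂ) (v : Fin (d + 2) → ℂ) :
    blowUpC d ξ (recenter ξ v) = blowUpC d 0 v := by
  ext i
  by_cases hi : i = 0 <;> simp [blowUpC, recenter, hi]

lemma blowUpInf_toInfChart {v : Fin (d + 2) → ℂ} (hv : v 0 ≠ 0) :
    blowUpInf d (toInfChart v) = blowUpC d 0 v := by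
  ext i
  by_cases hi : i = 0 <;> simp [blowUpInf, toInfChart, blowUpC, hi, hv]

lemma blowUpC_blowUpSection {x : Fin (d + 2) → ℂ} (hx : x 0 ≠ 0) :
    blowUpC d 0 (blowUpSection x) = x := by
  ext i
  by_cases hi : i = 0
  · simp [blowUpSection, blowUpC, hi]
  · by_cases hi' : i = 1 <;> simp [blowUpSection, blowUpC, hi, hi', hx]

lemma analyticAt_blowUpC (ξ : ℂ) (v : Fin (d + 2) → ℂ) : AnalyticAt ℂ (blowUpC d ξ) v := by
  refine analyticAt_pi_iff.2 fun i => ?_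
  unfold blowUpC
  split_ifs
  exacts [analyticAt_apply 1 v, (analyticAt_const.add (analyticAt_apply 0 v)).mul
    (analyticAt_apply 1 v), analyticAt_apply i v]

lemma analyticAt_recenter (ξ : ℂ) (v : Fin (d + 2) → ℂ) : AnalyticAt ℂ (recenter ξ) v :=
  AnalyticAt.fun_comp (g := fun wv : ℂ × (Fin (d + 2) → ℂ) => Function.update wv.2 0 wv.1)
    (f := fun w : Fin (d + 2) → ℂ => (w 0 - ξ, w)) (analyticAt_update 0 _)
    (((analyticAt_apply 0 v).sub analyticAt_const).prod analyticAt_id)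

lemma analyticAt_toInfChart {v : Fin (d + 2) → ℂ} (hv : v 0 ≠ 0) : AnalyticAt ℂ toInfChart v := by
  refine analyticAt_pi_iff.2 fun i => ?_
  unfold toInfChart
  split_ifs
  exacts [(analyticAt_apply 0 v).inv hv, (analyticAt_apply 0 v).mul (analyticAt_apply 1 v),
    analyticAt_apply i v]

lemma analyticAt_blowUpSection {x : Fin (d + 2) → ℂ} (hx : x 0 ≠ 0) :
    AnalyticAt ℂ blowUpSection x := by
  refine analyticAt_pi_iff.2 fun i => ?_
  unfold blowUpSection
  split_ifs
  exacts [(analyticAt_apply 1 x).div (analyticAt_apply 0 x) hx, analyticAt_apply 0 x,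
    analyticAt_apply i x]

lemma continuous_blowUpC (ξ : ℂ) : Continuous (blowUpC d ξ) :=
  continuous_iff_continuousAt.2 fun v => (analyticAt_blowUpC ξ v).continuousAt

lemma continuous_blowUpInf : Continuous (blowUpInf d) := by
  refine continuous_pi fun i => ?_
  unfold blowUpInf
  split_ifs <;> fun_prop

lemma blowUpC_zero (ξ : ℂ) : blowUpC d ξ 0 = 0 := by
  ext i
  simp [blowUpC]

lemma blowUpInf_zero : blowUpInf d 0 = 0 := by
  ext i
  simp [blowUpInf]

lemma blowUpC_apply_ne_zero {v : Fin (d + 2) → ℂ} (hv : ∀ j, v j ≠ 0) (i : Fin (d + 2)) :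
    blowUpC d 0 v i ≠ 0 := by
  unfold blowUpC
  split_ifs
  exacts [hv 1, mul_ne_zero (by simpa using hv 0) (hv 1), hv i]

lemma starConvex_preimage_blowUpC (ρ : ℝ) :
    StarConvex ℝ 0 (blowUpC d 0 ⁻¹' polydisk (d + 2) ρ) := by
  refine starConvex_zero_iff.2 fun v hv t ht₀ ht₁ i => ?_
  suffices ∃ s : ℝ, 0 ≤ s ∧ s ≤ 1 ∧ blowUpC d 0 (t • v) i = s • blowUpC d 0 v i by
    obtain ⟨s, hs₀, hs₁, heq⟩ := this
    rw [heq, norm_smul, Real.norm_of_nonneg hs₀]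
    exact (mul_le_of_le_one_left (norm_nonneg _) hs₁).trans_lt (hv i)
  unfold blowUpC
  split_ifs
  · exact ⟨t, ht₀, ht₁, rfl⟩
  · refine ⟨t * t, mul_nonneg ht₀ ht₀, mul_le_one₀ ht₁ ht₀ ht₁, ?_⟩
    simp only [Pi.smul_apply, real_smul, ofReal_mul]
    ring
  · exact ⟨t, ht₀, ht₁, rfl⟩

end Charts

section Expansions

variable {d : ℕ} {P f : (Fin (d + 2) → ℂ) → ℂ} {α β r ρ ρ' : ℝ}

lemma frequently_comp_blowUpC_ne_zero (hP : AnalyticOnNhd ℂ P (polydisk (d + 2) ρ))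
    (hPne : ∃ x ∈ polydisk (d + 2) ρ, P x ≠ 0) {p : Fin (d + 2) → ℂ}
    (hp : blowUpC d 0 p ∈ polydisk (d + 2) ρ) : ∃ᶠ v in 𝓝 p, P (blowUpC d 0 v) ≠ 0 := by
  intro hzero
  have hconn : IsPreconnected (blowUpC d 0 ⁻¹' polydisk (d + 2) ρ) :=
    have hstar := starConvex_preimage_blowUpC (d := d) ρ
    (hstar.isPathConnected (hstar.mem ⟨p, hp⟩)).isConnected.isPreconnected
  have hvanish := (hP.comp (fun v _ => analyticAt_blowUpC 0 v) (mapsTo_preimage _ _)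
    ).eqOn_zero_of_preconnected_of_eventuallyEq_zero hconn hp (hzero.mono fun _ => not_not.1)
  obtain ⟨x, hx, hPx⟩ := hPne
  have hnear : ∀ᶠ y in 𝓝 x, y ∈ polydisk (d + 2) ρ := (isOpen_polydisk (d + 2) ρ).mem_nhds hx
  obtain ⟨y, hy, hyρ, hPy⟩ := ((frequently_forall_ne 0 x).and_eventually
    (hnear.and ((hP x hx).continuousAt.eventually_ne hPx))).exists
  have hy0 : blowUpC d 0 (blowUpSection y) = y := blowUpC_blowUpSection (hy 0)
  refine hPy ?_
  simpa [hy0] using hvanish (x := blowUpSection y) (by rwa [mem_preimage, hy0])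

lemma isSectorialGauge_comp_blowUpC (hαβ : α < β)
    (hP : AnalyticOnNhd ℂ P (polydisk (d + 2) ρ)) (hPne : ∃ x ∈ polydisk (d + 2) ρ, P x ≠ 0)
    (hρ' : ρ' < ρ) :
    IsSectorialGauge (P ∘ blowUpC d 0) α β (blowUpC d 0 ⁻¹' PSector (d + 2) P α β ρ)
      (blowUpC d 0 ⁻¹' polydisk (d + 2) ρ') := by
  obtain ⟨ha, M, hM⟩ := isBoundedAnalyticOn_polydisk hP hρ'
  refine ⟨hαβ, ⟨ha.comp (fun v _ => analyticAt_blowUpC 0 v) (mapsTo_preimage _ _), M,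
    fun v hv => hM _ hv⟩, fun p hp => frequently_comp_blowUpC_ne_zero hP hPne
      (polydisk_mono hρ'.le hp), fun v hv hPv => mem_closure_iff_frequently.2 ?_⟩
  exact ((frequently_forall_ne 0 v).and_eventually ((continuous_blowUpC 0).continuousAt.eventually
    (eventually_mem_PSector hP.continuousOn (polydisk_mono hρ'.le hv) hPv))).mono
      fun w hw => hw.2 (blowUpC_apply_ne_zero hw.1)

/-- On the polydisk of radius `r` of a chart `b`, the function `f ∘ b` has approximants of every
order with respect to `P ∘ b`. -/
def IsApproximableInChart (f P : (Fin (d + 2) → ℂ) → ℂ) (α β ρ : ℝ)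
    (b : (Fin (d + 2) → ℂ) → Fin (d + 2) → ℂ) (r : ℝ) : Prop :=
  ∀ n, ∃ g, IsApproximant (f ∘ b) (P ∘ b)
    (PSector (d + 2) (P ∘ b) α β r ∩ b ⁻¹' PSector (d + 2) P α β ρ) n (polydisk (d + 2) r) g

lemma IsApproximableInChart.exists_mapsTo {b : (Fin (d + 2) → ℂ) → Fin (d + 2) → ℂ}
    (h : IsApproximableInChart f P α β ρ b r) (hb : Continuous b) (hb0 : b 0 = 0) (hr : 0 < r)
    (hρ' : 0 < ρ') : ∃ r' > 0, IsApproximableInChart f P α β ρ b r' ∧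
      MapsTo b (polydisk (d + 2) r') (polydisk (d + 2) ρ') := by
  obtain ⟨r', hr', hrr', hmaps⟩ := exists_polydisk_subset_preimage hb.continuousAt hb0 hr hρ'
  refine ⟨r', hr', fun n => ?_, hmaps⟩
  obtain ⟨g, hg, C, hC⟩ := h n
  refine ⟨g, hg.mono (polydisk_mono hrr'), C, fun v hv => hC v ?_⟩
  obtain ⟨-, hne, hPv⟩ := mem_PSector_iff.1 hv.2.1
  have hvr := polydisk_mono hrr' hv.1
  exact ⟨hvr, mem_PSector_iff.2 ⟨hvr, hne, hPv⟩, hv.2.2⟩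

lemma IsApproximableInChart.isApproximableOn {b τ : (Fin (d + 2) → ℂ) → Fin (d + 2) → ℂ}
    {Ω : Set (Fin (d + 2) → ℂ)} (hchart : IsApproximableInChart f P α β ρ b r)
    (hP : AnalyticOnNhd ℂ P (polydisk (d + 2) ρ))
    (hf : AnalyticOnNhd ℂ f (PSector (d + 2) P α β ρ)) (hΩ : IsOpen Ω)
    (hτ : AnalyticOnNhd ℂ τ Ω) (hτΩ : MapsTo τ Ω (polydisk (d + 2) r))
    (hτne : ∀ v ∈ Ω, ∃ᶠ w in 𝓝 v, ∀ j, τ w j ≠ 0)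
    (hbτ : EqOn (b ∘ τ) (blowUpC d 0) Ω)
    (hb : MapsTo b (polydisk (d + 2) r) (polydisk (d + 2) ρ')) :
    IsApproximableOn (f ∘ blowUpC d 0) (P ∘ blowUpC d 0)
      (blowUpC d 0 ⁻¹' PSector (d + 2) P α β ρ) (blowUpC d 0 ⁻¹' polydisk (d + 2) ρ') Ω := by
  have hcont (v) : ContinuousAt (blowUpC d 0) v := (continuous_blowUpC 0).continuousAt
  refine ⟨hΩ, fun v hv => ?_, fun n => ?_⟩
  · rw [mem_preimage, ← hbτ hv]
    exact hb (hτΩ hv)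
  obtain ⟨g, hg⟩ := hchart n
  refine ⟨g ∘ τ, hg.comp hτ hτΩ (hbτ.comp_left (g := f)) (hbτ.comp_left (g := P))
    (fun v hv => (hf _ hv.2).continuousAt.comp (hcont v))
    (fun v hv => (hP _ (PSector_subset_polydisk hv.2)).continuousAt.comp (hcont v))
    fun v hv => mem_closure_iff_frequently.2 ?_⟩
  refine ((hτne v hv.1).and_eventually ((hΩ.eventually_mem hv.1).and ((hcont v).eventually_mem
    ((isOpen_PSector hP.continuousOn).mem_nhds hv.2)))).mono ?_
  rintro w ⟨hne, hwΩ, hwS⟩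
  rw [← hbτ hwΩ] at hwS
  exact ⟨hwΩ, mem_PSector_iff.2 ⟨hτΩ hwΩ, hne, (mem_PSector_iff.1 hwS).2.2⟩, hwS⟩

lemma exists_isApproximableOn_cylinder (hP : AnalyticOnNhd ℂ P (polydisk (d + 2) ρ))
    (hf : AnalyticOnNhd ℂ f (PSector (d + 2) P α β ρ)) (hρ' : 0 < ρ') (hr : 0 < r) {ξ : ℂ}
    (h : IsApproximableInChart f P α β ρ (blowUpC d ξ) r) :
    ∃ δ > 0, IsApproximableOn (f ∘ blowUpC d 0) (P ∘ blowUpC d 0)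
      (blowUpC d 0 ⁻¹' PSector (d + 2) P α β ρ) (blowUpC d 0 ⁻¹' polydisk (d + 2) ρ')
      (cylinder 0 (Metric.ball ξ δ) δ) := by
  obtain ⟨δ, hδ, hchart, hmaps⟩ := h.exists_mapsTo (continuous_blowUpC ξ) (blowUpC_zero ξ) hr hρ'
  refine ⟨δ, hδ, hchart.isApproximableOn hP hf (isOpen_cylinder Metric.isOpen_ball)
    (fun v _ => analyticAt_recenter ξ v) (fun v hv j => ?_) (fun v _ => ?_)
    (fun v _ => blowUpC_recenter ξ v) hmaps⟩
  · rcases eq_or_ne j 0 with rfl | hj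
    · simpa [recenter] using mem_ball_iff_norm.1 hv.1
    · simpa [recenter, hj] using hv.2 j hj
  · refine (frequently_forall_ne (Pi.single 0 ξ) v).mono fun w hw j => ?_
    rcases eq_or_ne j 0 with rfl | hj
    · simpa [recenter, sub_eq_zero] using hw 0
    · simpa [recenter, hj] using hw j

/-- The part of the polydisk of radius `r` in the chart `b_∞` that is covered by the chart `b_0`. -/
def infChartDomain (d : ℕ) (r : ℝ) : Set (Fin (d + 2) → ℂ) :=
  {v | v 0 ≠ 0 ∧ toInfChart v ∈ polydisk (d + 2) r}

lemma isOpen_infChartDomain (r : ℝ) : IsOpen (infChartDomain d r) := by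
  refine isOpen_iff_mem_nhds.2 fun v hv => ?_
  exact ((continuous_apply 0).continuousAt.eventually_ne hv.1).and
    ((analyticAt_toInfChart hv.1).continuousAt.eventually_mem ((isOpen_polydisk _ r).mem_nhds hv.2))

lemma exists_isApproximableOn_infChartDomain (hP : AnalyticOnNhd ℂ P (polydisk (d + 2) ρ))
    (hf : AnalyticOnNhd ℂ f (PSector (d + 2) P α β ρ)) (hρ' : 0 < ρ') (hr : 0 < r)
    (h : IsApproximableInChart f P α β ρ (blowUpInf d) r) :
    ∃ r' > 0, IsApproximableOn (f ∘ blowUpC d 0) (P ∘ blowUpC d 0)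
      (blowUpC d 0 ⁻¹' PSector (d + 2) P α β ρ) (blowUpC d 0 ⁻¹' polydisk (d + 2) ρ')
      (infChartDomain d r') := by
  obtain ⟨r', hr', hchart, hmaps⟩ := h.exists_mapsTo continuous_blowUpInf blowUpInf_zero hr hρ'
  refine ⟨r', hr', hchart.isApproximableOn hP hf (isOpen_infChartDomain r')
    (fun v hv => analyticAt_toInfChart hv.1) (fun v hv => hv.2) (fun v _ => ?_)
    (fun v hv => blowUpInf_toInfChart hv.1) hmaps⟩
  refine (frequently_forall_ne 0 v).mono fun w hw j => ?_
  unfold toInfChart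
  split_ifs
  exacts [inv_ne_zero (hw 0), mul_ne_zero (hw 0) (hw 1), hw j]

lemma mem_infChartDomain_of_mem_cylinder {δ : ℝ} {v : Fin (d + 2) → ℂ} (hr : 0 < r)
    (hδ : δ ≤ r) (hv : v ∈ cylinder 0 {z | r⁻¹ < ‖z‖} δ) (hv₀₁ : ‖v 0 * v 1‖ < r) :
    v ∈ infChartDomain d r := by
  have hv₀ : 0 < ‖v 0‖ := (inv_pos.2 hr).trans hv.1
  refine ⟨norm_pos_iff.1 hv₀, fun j => ?_⟩
  unfold toInfChart
  split_ifs with hj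
  · rw [norm_inv]
    exact inv_lt_of_inv_lt₀ hr hv.1
  · exact hv₀₁
  · exact (hv.2 j hj).trans_le hδ

lemma preimage_blowUpC_polydisk_subset {ε R₁ R₂ : ℝ} (hε : ε ≤ r) (hR : R₂ < R₁) :
    blowUpC d 0 ⁻¹' polydisk (d + 2) ε ⊆ cylinder 0 (Metric.ball 0 R₁) ε ∪
      (cylinder 0 {z | R₂ < ‖z‖} ε ∩ {v | ‖v 0 * v 1‖ < r}) := by
  intro v hv
  have hvj (j) (hj : j ≠ 0) : ‖v j‖ < ε := by
    rcases eq_or_ne j 1 with rfl | hj'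
    · simpa [blowUpC] using hv 0
    · simpa [blowUpC, hj, hj'] using hv j
  have hv₀₁ : ‖v 0 * v 1‖ < ε := by simpa [blowUpC] using hv 1
  rcases lt_or_ge ‖v 0‖ R₁ with hv₀ | hv₀
  · exact Or.inl ⟨mem_ball_zero_iff.2 hv₀, hvj⟩
  · exact Or.inr ⟨⟨hR.trans_le hv₀, hvj⟩, hv₀₁.trans_le hε⟩

variable {F Q : (Fin (d + 2) → ℂ) → ℂ} {S D : Set (Fin (d + 2) → ℂ)} {δ δ' : ℝ}

lemma IsApproximableOn.union_infChartDomain (hQ : IsSectorialGauge Q α β S D) (hr : 0 < r)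
    (hδ : δ' < δ) (hδr : δ ≤ r) (hδr' : 4 * r⁻¹ * δ ≤ r)
    (hfin : IsApproximableOn F Q S D (cylinder 0 (Metric.ball 0 (4 * r⁻¹)) δ))
    (hinf : IsApproximableOn F Q S D (infChartDomain d r)) :
    IsApproximableOn F Q S D (blowUpC d 0 ⁻¹' polydisk (d + 2) δ') := by
  have hs : 0 < r⁻¹ := inv_pos.2 hr
  have hoverlap : cylinder 0 {z | r⁻¹ < ‖z‖ ∧ ‖z‖ < 4 * r⁻¹} δ ⊆ infChartDomain d r := by
    intro v hv
    refine mem_infChartDomain_of_mem_cylinder hr hδr ⟨hv.1.1, hv.2⟩ ?_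
    rw [norm_mul]
    exact (mul_lt_mul'' hv.1.2 (hv.2 1 one_ne_zero) (norm_nonneg _) (norm_nonneg _)).trans_le hδr'
  have hfar : cylinder 0 {z | 2 * r⁻¹ < ‖z‖} δ' ∩ {v | ‖v 0 * v 1‖ < r} ⊆ infChartDomain d r :=
    fun v hv => mem_infChartDomain_of_mem_cylinder hr (hδ.le.trans hδr)
      ⟨(by linarith : r⁻¹ < 2 * r⁻¹).trans hv.1.1, hv.1.2⟩ hv.2
  have hsplit : HasCousinSplitting
      (cylinder 0 (Metric.ball 0 (4 * r⁻¹)) δ ∩ infChartDomain d r)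
      (cylinder 0 (Metric.ball 0 (3 * r⁻¹)) δ')
      (cylinder 0 {z | 2 * r⁻¹ < ‖z‖} δ' ∩ {v | ‖v 0 * v 1‖ < r}) :=
    (hasCousinSplitting_annulus 0 hs.le (by linarith) (by linarith) (by linarith) hδ).mono
      (fun v hv => ⟨⟨mem_ball_zero_iff.2 hv.1.2, hv.2⟩, hoverlap hv⟩) subset_rfl inter_subset_left
  exact (hfin.union_of_hasCousinSplitting hQ hinf (isOpen_cylinder Metric.isOpen_ball)
    ((isOpen_cylinder (isOpen_lt continuous_const continuous_norm)).inter
      (isOpen_lt (by fun_prop) continuous_const))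
    (cylinder_mono (Metric.ball_subset_ball (by linarith)) hδ.le) hfar hsplit).mono
    ((isOpen_polydisk _ _).preimage (continuous_blowUpC 0))
    (preimage_blowUpC_polydisk_subset (hδ.le.trans hδr) (by linarith))

theorem exists_isApproximableOn_preimage_polydisk (hQ : IsSectorialGauge Q α β S D)
    (hfin : ∀ R ≥ 0, ∃ δ > 0, IsApproximableOn F Q S D (cylinder 0 (Metric.ball 0 R) δ))
    (hr : 0 < r) (hinf : IsApproximableOn F Q S D (infChartDomain d r)) :
    ∃ ε > 0, IsApproximableOn F Q S D (blowUpC d 0 ⁻¹' polydisk (d + 2) ε) := by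
  obtain ⟨δ₀, hδ₀, h₀⟩ := hfin (4 * r⁻¹) (by positivity)
  obtain ⟨δ, hδ, hδδ₀, hδr, hδr'⟩ : ∃ δ > 0, δ ≤ δ₀ ∧ δ ≤ r ∧ 4 * r⁻¹ * δ ≤ r := by
    refine ⟨min δ₀ (min r (r / (4 * r⁻¹))), by positivity, min_le_left _ _,
      (min_le_right _ _).trans (min_le_left _ _), ?_⟩
    rw [mul_comm, ← le_div_iff₀ (by positivity)]
    exact (min_le_right _ _).trans (min_le_right _ _)
  exact ⟨δ / 2, half_pos hδ, (h₀.mono (isOpen_cylinder Metric.isOpen_ball)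
    (cylinder_mono subset_rfl hδδ₀)).union_infChartDomain hQ hr (half_lt_self hδ) hδr hδr' hinf⟩

lemma IsApproximant.blow_down {n : ℕ} {ε : ℝ} {g : (Fin (d + 2) → ℂ) → ℂ}
    (hP : AnalyticOnNhd ℂ P (polydisk (d + 2) ρ))
    (hf : AnalyticOnNhd ℂ f (PSector (d + 2) P α β ρ))
    (h : IsApproximant (f ∘ blowUpC d 0) (P ∘ blowUpC d 0) (blowUpC d 0 ⁻¹' PSector (d + 2) P α β ρ)
      n (blowUpC d 0 ⁻¹' polydisk (d + 2) ε) g) :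
    ∃ g', IsApproximant f P (PSector (d + 2) P α β ρ) n (polydisk (d + 2) ε) g' := by
  have hsection {x : Fin (d + 2) → ℂ} (hx : x 0 ≠ 0) := blowUpC_blowUpSection hx
  refine IsApproximant.exists_extension (q := fun x => x 0) (g := g ∘ blowUpSection)
    (isOpen_polydisk _ _) (fun x _ => analyticAt_apply 0 x)
    (fun x _ => (frequently_forall_ne 0 x).mono fun w hw => hw 0)
    (fun x hx => (mem_PSector_iff.1 hx.2).2.1 0) ?_
  refine h.comp (fun x hx => analyticAt_blowUpSection hx.2) (fun x hx => ?_) (fun x hx => ?_)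
    (fun x hx => ?_) (fun x hx => (hf x hx.2).continuousAt)
    (fun x hx => (hP x (PSector_subset_polydisk hx.2)).continuousAt)
    fun x hx => subset_closure ⟨hx.1, ?_⟩
  · rw [mem_preimage, hsection hx.2]
    exact hx.1
  · exact congrArg f (hsection hx.2)
  · exact congrArg P (hsection hx.2)
  · rw [mem_preimage, mem_preimage, hsection hx.1.2]
    exact hx.2

end Expansions

/-- **Stability of `P`-asymptotic expansions under blow-down** (Proposition 6.1).
If `f ∘ b_ξ` admits a `(P∘b_ξ)`-asymptotic expansion in the estimate sense for every chart
`ξ ∈ ℂ ∪ {∞}` of the blow-up of codimension-two center, then `f` admits a `P`-asymptotic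
expansion in the estimate sense. -/
theorem P_asymptotics_stable_under_blow_down
    (d : ℕ) (ρ₀ : ℝ) (hρ₀ : 0 < ρ₀)
    (P : (Fin (d + 2) → ℂ) → ℂ) (hP : AnalyticOnNhd ℂ P (polydisk (d + 2) ρ₀))
    (hP0 : P 0 = 0) (hPne : ∃ x ∈ polydisk (d + 2) ρ₀, P x ≠ 0)
    (α β : ℝ) (hαβ : α < β) (h2π : β ≤ α + 2 * Real.pi)
    (f : (Fin (d + 2) → ℂ) → ℂ)
    (hf : AnalyticOnNhd ℂ f (PSector (d + 2) P α β ρ₀))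
    (hC : ∀ ξ : ℂ, ∃ rξ > 0,
      (∀ v ∈ polydisk (d + 2) rξ, blowUpC d ξ v ∈ polydisk (d + 2) ρ₀) ∧
      ∃ g : ℕ → (Fin (d + 2) → ℂ) → ℂ, ∃ C : ℕ → ℝ,
        (∀ n, AnalyticOnNhd ℂ (g n) (polydisk (d + 2) rξ)) ∧
        (∀ n, ∃ M, ∀ v ∈ polydisk (d + 2) rξ, ‖g n v‖ ≤ M) ∧
        (∀ n, 0 < C n) ∧
        (∀ n, ∀ v ∈ PSector (d + 2) (fun w => P (blowUpC d ξ w)) α β rξ,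
          blowUpC d ξ v ∈ PSector (d + 2) P α β ρ₀ →
          ‖f (blowUpC d ξ v) - g n v‖ ≤
            C n * ‖P (blowUpC d ξ v)‖ ^ n))
    (hInf : ∃ rI > 0,
      (∀ v ∈ polydisk (d + 2) rI, blowUpInf d v ∈ polydisk (d + 2) ρ₀) ∧
      ∃ g : ℕ → (Fin (d + 2) → ℂ) → ℂ, ∃ C : ℕ → ℝ,
        (∀ n, AnalyticOnNhd ℂ (g n) (polydisk (d + 2) rI)) ∧
        (∀ n, ∃ M, ∀ v ∈ polydisk (d + 2) rI, ‖g n v‖ ≤ M) ∧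
        (∀ n, 0 < C n) ∧
        (∀ n, ∀ v ∈ PSector (d + 2) (fun w => P (blowUpInf d w)) α β rI,
          blowUpInf d v ∈ PSector (d + 2) P α β ρ₀ →
          ‖f (blowUpInf d v) - g n v‖ ≤
            C n * ‖P (blowUpInf d v)‖ ^ n)) :
    ∃ ρ > 0, ρ ≤ ρ₀ ∧
      ∃ fn : ℕ → (Fin (d + 2) → ℂ) → ℂ, ∃ B : ℕ → ℝ,
        (∀ n, AnalyticOnNhd ℂ (fn n) (polydisk (d + 2) ρ)) ∧
        (∀ n, ∃ M, ∀ x ∈ polydisk (d + 2) ρ, ‖fn n x‖ ≤ M) ∧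
        (∀ n, 0 < B n) ∧
        (∀ n, ∀ x ∈ PSector (d + 2) P α β ρ,
          ‖f x - fn n x‖ ≤ B n * ‖P x‖ ^ n) := by
  have hfin (ξ : ℂ) : ∃ δ > 0, IsApproximableOn (f ∘ blowUpC d 0) (P ∘ blowUpC d 0)
      (blowUpC d 0 ⁻¹' PSector (d + 2) P α β ρ₀) (blowUpC d 0 ⁻¹' polydisk (d + 2) (ρ₀ / 2))
      (cylinder 0 (Metric.ball ξ δ) δ) := by
    obtain ⟨r, hr, -, g, C, hg, hM, -, hest⟩ := hC ξ
    exact exists_isApproximableOn_cylinder hP hf (half_pos hρ₀) hr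
      fun n => ⟨g n, ⟨hg n, hM n⟩, C n, fun v hv => hest n v hv.2.1 hv.2.2⟩
  obtain ⟨r, hr, -, g, C, hg, hM, -, hest⟩ := hInf
  obtain ⟨r', hr', hinf⟩ := exists_isApproximableOn_infChartDomain hP hf (half_pos hρ₀) hr
    fun n => ⟨g n, ⟨hg n, hM n⟩, C n, fun v hv => hest n v hv.2.1 hv.2.2⟩
  have hQ := isSectorialGauge_comp_blowUpC hαβ hP hPne (half_lt_self hρ₀)
  obtain ⟨ε, hε, happrox⟩ := exists_isApproximableOn_preimage_polydisk hQ
    (fun _ hR => exists_isApproximableOn_cylinder_ball hQ hfin hR) hr' hinf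
  choose G hG using fun n => (happrox.exists_isApproximant n).elim fun _ hg => hg.blow_down hP hf
  choose B hB using fun n => (hG n).exists_norm_sub_le
  refine ⟨min ε ρ₀, lt_min hε hρ₀, min_le_right _ _, G, fun n => max (B n) 1, fun n => ?_,
    fun n => ?_, fun n => by positivity, fun n x hx => ?_⟩
  · exact (hG n).isBoundedAnalyticOn.1.mono (polydisk_mono (min_le_left _ _))
  · exact ((hG n).isBoundedAnalyticOn.mono (polydisk_mono (min_le_left _ _))).2
  · obtain ⟨hdisk, hne, hPx⟩ := mem_PSector_iff.1 hx
    exact (hB n x ⟨polydisk_mono (min_le_left _ _) hdisk, mem_PSector_iff.2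
      ⟨polydisk_mono (min_le_right _ _) hdisk, hne, hPx⟩⟩).trans (by gcongr; exact le_max_left _ _)
end
end
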